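/- Let F₁ and F₂ be free groups, let a ∈ F₁ \ {1} and b ∈ F₂ \ {1} be elements that are not proper powers (i.e., a ≠ wᵏ for |k| > 1 and b ≠ zˡ for |l| > 1). Then the amalgamated free product G = F₁ *_{a=b} F₂ is 2-order separable: for any g₁, g₂ ∈ G such that g₁ is conjugate to neither g₂ nor g₂⁻¹, there exists a homomorphism φ from G onto a finite group with |φ(g₁)| ≠ |φ(g₂)|. -/

import Mathlib

open Monoid Subgroup

/-- The two free factors of the amalgam, indexed by `Bool`. -/
def fam (α β : Type) : Bool → Type
  | true => FreeGroup α
  | false => FreeGroup β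

instance famGroup (α β : Type) : ∀ i : Bool, Group (fam α β i)
  | true => inferInstanceAs (Group (FreeGroup α))
  | false => inferInstanceAs (Group (FreeGroup β))

/-- The maps from the infinite cyclic group `FreeGroup Unit` sending the
generator to `a` resp. `b`; their pushout is `F₁ *_{a=b} F₂`. -/
def amalMaps {α β : Type} (a : FreeGroup α) (b : FreeGroup β) :
    ∀ i : Bool, FreeGroup Unit →* fam α β i
  | true => FreeGroup.lift fun _ => a
  | false => FreeGroup.lift fun _ => b

/-- An element is not a proper power: `a = w ^ k` forces `|k| ≤ 1`. -/
def NotProperPower {G : Type} [Group G] (a : G) : Prop :=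
  ∀ (w : G) (k : ℤ), a = w ^ k → k.natAbs ≤ 1

/-!
A homomorphism from the amalgam `G` to a finite group is a pair of compatible actions of `F₁` and
`F₂`. If `a` and `b` have equal orders in finite quotients `Γ₁` and `Γ₂`, both act freely on
copies of `Γ₁ × Γ₂ × Z`, and any bijection matching their orbits glues the two translation actions
to an action of `G`. The truncated Magnus expansion provides finite quotients of a free group in
which a given element has a prescribed order, and ones which separate the double cosets `⟨a⟩ f
⟨a⟩`.

Let `u` be hyperbolic, that is, not conjugate into a factor. Its cyclic word closes up to a
circuit in a finite set `X` on which `G` acts, and by double coset separation the vertices of the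
circuit can be put into distinct cycles of `a`. Twisting the action of `F₂` on `X × ℤ/N` by the
coboundary of an `a`-invariant function `X → ℤ/N` does not change the orders of the elements of
the factors, but can make the order of `u` divisible by `N`; so `u` is separated from the factors.
If `v` is hyperbolic too, then there are two cases. Either some path of `v` stays in the cycles of
`a` along a circuit of `u` or `u⁻¹`; then `v` follows this circuit, so that powers of `v` and of
`u` or `u⁻¹` are conjugate, and their exponents separate the orders. Or, for some prime `q`, one
twist by `ℤ/q` displaces every path of `v` and leaves the circuit of `u` in place; a second twist,
by `ℤ/p` and of sum zero along each fibre `ℤ/q`, then changes the order of `u` while that of `v`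
stays the same.

Free groups themselves embed into an amalgam by hyperbolic elements, which settles the case of two
elements of one factor. For `f ∈ F₁` and `g ∈ F₂` one may assume that `f` is not conjugate into
`⟨a⟩`, and then varies the order of `f` while keeping that of `a`, and hence the action of `F₂`,
fixed.
-/

section Truncation

variable {α S : Type*}

theorem exists_perm_eq_on_finset (T : Finset S) (σ : Equiv.Perm S) :
    ∃ τ : Equiv.Perm T, ∀ x y : T, σ x = y → τ x = y := by
  obtain ⟨g, hg⟩ := Set.MapsTo.exists_equiv_extend_of_card_eq (α := T) (t := T)
    (s := {x : T | σ x ∈ T}) (f := fun x => σ x) (by simp) (fun x hx => hx)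
    (σ.injective.comp Subtype.val_injective).injOn
  exact ⟨g, fun x y h => Subtype.ext ((hg x (by simp [h])).trans h)⟩

theorem freeGroup_mk_cons_true (x : α) (L : List (α × Bool)) :
    FreeGroup.mk ((x, true) :: L) = FreeGroup.of x * FreeGroup.mk L := by
  rw [FreeGroup.of, FreeGroup.mul_mk, List.singleton_append]

theorem freeGroup_mk_cons_false (x : α) (L : List (α × Bool)) :
    FreeGroup.mk ((x, false) :: L) = (FreeGroup.of x)⁻¹ * FreeGroup.mk L := by
  rw [FreeGroup.of, FreeGroup.inv_mk, FreeGroup.mul_mk]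
  rfl

variable [MulAction (FreeGroup α) S]

theorem lift_mk_apply_of_suffixes_mem {T : Finset S} {σ : α → Equiv.Perm T}
    (hσ : ∀ a, ∀ x y : T, FreeGroup.of a • (x : S) = y → σ a x = y) {s : S} (hs : s ∈ T)
    (L : List (α × Bool)) (hL : ∀ L', L' <:+ L → FreeGroup.mk L' • s ∈ T) :
    FreeGroup.lift σ (FreeGroup.mk L) ⟨s, hs⟩ = ⟨FreeGroup.mk L • s, hL L List.suffix_rfl⟩ := by
  induction L with
  | nil =>
    apply Subtype.ext
    simp only [← FreeGroup.one_eq_mk, map_one, one_smul, Equiv.Perm.one_apply]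
  | cons p L ih =>
    obtain ⟨a, _ | _⟩ := p
    · simp only [freeGroup_mk_cons_false, map_mul, map_inv, FreeGroup.lift_apply_of,
        Equiv.Perm.mul_apply, ih fun L' h => hL L' (h.trans (List.suffix_cons _ L))]
      refine Equiv.Perm.inv_eq_iff_eq.mpr (hσ a _ _ ?_).symm
      simp only [mul_smul, smul_inv_smul]
    · simp only [freeGroup_mk_cons_true, map_mul, FreeGroup.lift_apply_of, Equiv.Perm.mul_apply,
        ih fun L' h => hL L' (h.trans (List.suffix_cons _ L))]
      exact hσ a _ _ (mul_smul _ _ _).symm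

/- Marshall Hall's argument: keep the finitely many points visited by the words of `W`, and complete
each generator, a partial injection of that finite set, to a permutation. -/
theorem exists_finite_truncation (s : S) (W : Finset (FreeGroup α)) :
    ∃ (T : Finset S) (hs : s ∈ T) (ψ : FreeGroup α →* Equiv.Perm T),
      ∀ w ∈ W, (ψ w ⟨s, hs⟩ : S) = w • s := by
  classical
  let T : Finset S :=
    insert s (W.biUnion fun w => (w.toWord.tails.map fun L => FreeGroup.mk L • s).toFinset)
  choose σ hσ using fun a : α =>
    exists_perm_eq_on_finset T (MulAction.toPerm (FreeGroup.of a) : Equiv.Perm S)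
  have hs : s ∈ T := Finset.mem_insert_self _ _
  refine ⟨T, hs, FreeGroup.lift σ, fun w hw => ?_⟩
  have key := lift_mk_apply_of_suffixes_mem hσ hs w.toWord fun L hL =>
    Finset.mem_insert_of_mem <| Finset.mem_biUnion.mpr ⟨w, hw, List.mem_toFinset.mpr <|
      List.mem_map.mpr ⟨L, (List.mem_tails _ _).mpr hL, rfl⟩⟩
  simpa only [FreeGroup.mk_toWord] using congrArg Subtype.val key

end Truncation

section Potency

variable {α : Type*}

theorem map_smul_of_map_generator_smul {G G' M N : Type*} [Group G] [Group G'] [MulAction G M]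
    [MulAction G' N] (ρ : FreeGroup α →* G) (ρ' : FreeGroup α →* G') (T : M → N)
    (h : ∀ x m, T (ρ (FreeGroup.of x) • m) = ρ' (FreeGroup.of x) • T m) (g : FreeGroup α) (m : M) :
    T (ρ g • m) = ρ' g • T m := by
  induction g using FreeGroup.induction_on generalizing m with
  | C1 => simp only [map_one, one_smul]
  | of x => exact h x m
  | inv_of x _ => rw [map_inv, map_inv, eq_inv_smul_iff, ← h, smul_inv_smul]
  | mul g g' hg hg' => rw [map_mul, map_mul, mul_smul, mul_smul, hg, hg']

open Classical in
/-- The unipotent matrix `1 + ∑ E (j + 1) j`, the sum being over the `j` with `y j = x`. -/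
noncomputable def magnusGenerator (R : Type*) [CommRing R] (d : ℕ) (y : ℕ → Option α) (x : α) :
    (Fin (d + 1) → R) ≃ₗ[R] (Fin (d + 1) → R) where
  toFun φ := Fin.cons (φ 0) fun j : Fin d => φ j.succ + if y j = some x then φ j.castSucc else 0
  invFun φ := Fin.induction (φ 0) fun j r => φ j.succ - if y j = some x then r else 0
  map_add' φ ψ := by
    ext j
    refine Fin.cases rfl (fun j => ?_) j
    simp only [Pi.add_apply, Fin.cons_succ]
    split_ifs <;> ring
  map_smul' c φ := by
    ext j
    refine Fin.cases rfl (fun j => ?_) j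
    simp only [Pi.smul_apply, Fin.cons_succ, smul_eq_mul, RingHom.id_apply]
    split_ifs <;> ring
  left_inv φ := by
    ext j
    induction j using Fin.induction with
    | zero => rfl
    | succ j ih =>
      beta_reduce at ih ⊢
      rw [Fin.induction_succ, ih, Fin.cons_succ, add_sub_cancel_right]
  right_inv φ := by
    ext j
    refine Fin.cases rfl (fun j => ?_) j
    beta_reduce
    rw [Fin.cons_succ, Fin.induction_succ, sub_add_cancel]

/-- The action of a free group through its Magnus expansion `x ↦ 1 + X`, truncated at degree `d`.
The variable `X` raises the coordinate `j` to `j + 1` when the label `y j` is `x`, so that the last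
row of the matrix of `g` holds the Magnus coefficients of `g` at the words read off from `y`. -/
noncomputable def magnusRep (R : Type*) [CommRing R] (d : ℕ) (y : ℕ → Option α) :
    FreeGroup α →* ((Fin (d + 1) → R) ≃ₗ[R] (Fin (d + 1) → R)) :=
  FreeGroup.lift (magnusGenerator R d y)

variable {R : Type*} [CommRing R] {d : ℕ} {y : ℕ → Option α}

@[simp]
theorem magnusRep_of_apply_zero (x : α) (φ : Fin (d + 1) → R) :
    magnusRep R d y (FreeGroup.of x) φ 0 = φ 0 := by
  rw [magnusRep, FreeGroup.lift_apply_of]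
  rfl

open Classical in
@[simp]
theorem magnusRep_of_apply_succ (x : α) (φ : Fin (d + 1) → R) (j : Fin d) :
    magnusRep R d y (FreeGroup.of x) φ j.succ =
      φ j.succ + if y j = some x then φ j.castSucc else 0 := by
  rw [magnusRep, FreeGroup.lift_apply_of]
  rfl

theorem magnusRep_zero : magnusRep R 0 y = 1 := by
  refine FreeGroup.ext_hom _ _ fun x => LinearEquiv.ext fun φ => funext fun j => ?_
  rw [Fin.fin_one_eq_zero j]
  exact magnusRep_of_apply_zero x φ

theorem map_magnusRep {R' : Type*} [CommRing R'] (r : R →+* R') (g : FreeGroup α)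
    (φ : Fin (d + 1) → R) : r ∘ magnusRep R d y g φ = magnusRep R' d y g (r ∘ φ) := by
  refine map_smul_of_map_generator_smul (magnusRep R d y) (magnusRep R' d y) (r ∘ ·)
    (fun x φ => funext <| Fin.cases ?_ fun j => ?_) g φ
  · simp
  · simp [apply_ite r]

theorem init_magnusRep (g : FreeGroup α) (φ : Fin (d + 2) → R) :
    Fin.init (magnusRep R (d + 1) y g φ) = magnusRep R d y g (Fin.init φ : Fin (d + 1) → R) := by
  refine map_smul_of_map_generator_smul (magnusRep R (d + 1) y) (magnusRep R d y)
    (fun φ => (Fin.init φ : Fin (d + 1) → R)) (fun x φ => funext <| Fin.cases ?_ fun j => ?_) g φ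
  · simp [Fin.init]
  · simp [Fin.init]

theorem magnusRep_cons_zero (g : FreeGroup α) (φ : Fin (d + 1) → R) :
    magnusRep R (d + 1) y g (Fin.cons 0 φ : Fin (d + 2) → R) =
      (Fin.cons 0 (magnusRep R d (fun j => y (j + 1)) g φ) : Fin (d + 2) → R) := by
  refine (map_smul_of_map_generator_smul (magnusRep R d fun j => y (j + 1)) (magnusRep R (d + 1) y)
    (fun φ => (Fin.cons 0 φ : Fin (d + 2) → R)) (fun x φ => funext <| Fin.cases ?_ fun j => ?_)
    g φ).symm
  · simp
  · rw [LinearEquiv.smul_def, LinearEquiv.smul_def, magnusRep_of_apply_succ, Fin.cons_succ,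
      Fin.cons_succ]
    induction j using Fin.cases with
    | zero =>
      rw [Fin.castSucc_zero, Fin.cons_zero, ite_self, add_zero]
      exact magnusRep_of_apply_zero x φ
    | succ j => simp

theorem magnusRep_apply_eq_add_single {g : FreeGroup α} (h : ∀ y, magnusRep R d y g = 1) :
    ∃ c : R, ∀ φ, magnusRep R (d + 1) y g φ = φ + Pi.single (Fin.last (d + 1)) (c * φ 0) := by
  let e : Fin (d + 2) → R := Pi.single 0 1
  let c : R := magnusRep R (d + 1) y g e (Fin.last (d + 1))
  have apply_e : magnusRep R (d + 1) y g e = e + Pi.single (Fin.last (d + 1)) c := by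
    funext j
    refine Fin.lastCases (by simp [e, c]) (fun j => ?_) j
    have := congrFun (init_magnusRep (y := y) g e) j
    rw [h] at this
    simpa [Fin.init, j.castSucc_lt_last.ne] using this
  have single_smul (r : R) : r • (Pi.single (Fin.last (d + 1)) c : Fin (d + 2) → R) =
      Pi.single (Fin.last (d + 1)) (r • c) := (Pi.single_smul' _ r c).symm
  refine ⟨c, fun φ => ?_⟩
  have decomp : φ = (Fin.cons 0 (Fin.tail φ) : Fin (d + 2) → R) + φ 0 • e := by
    funext j
    refine Fin.cases (by simp [e]) (fun j => by simp [e, Fin.tail]) j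
  calc magnusRep R (d + 1) y g φ
      = magnusRep R (d + 1) y g (Fin.cons 0 (Fin.tail φ) : Fin (d + 2) → R) +
          φ 0 • magnusRep R (d + 1) y g e := by
        rw [← map_smul, ← map_add, ← decomp]
    _ = (Fin.cons 0 (Fin.tail φ) : Fin (d + 2) → R) + φ 0 • e +
          Pi.single (Fin.last (d + 1)) (c * φ 0) := by
        rw [magnusRep_cons_zero, h, LinearEquiv.coe_one, id, apply_e, smul_add, ← add_assoc,
          single_smul, smul_eq_mul, mul_comm c]
    _ = φ + Pi.single (Fin.last (d + 1)) (c * φ 0) := by rw [← decomp]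

theorem pow_apply_eq_add_single {T : (Fin (d + 2) → R) ≃ₗ[R] (Fin (d + 2) → R)} {c : R}
    (hT : ∀ φ, T φ = φ + Pi.single (Fin.last (d + 1)) (c * φ 0)) (k : ℕ) (φ : Fin (d + 2) → R) :
    (T ^ k) φ = φ + Pi.single (Fin.last (d + 1)) (k * c * φ 0) := by
  induction k with
  | zero => simp
  | succ k ih =>
    rw [pow_succ', LinearEquiv.mul_apply, ih, hT, add_assoc, ← Pi.single_add]
    simp [Fin.last_pos.ne]
    ring

theorem orderOf_eq_of_apply_eq_add_single {c : ℤ} (hc : c ≠ 0) {n : ℕ}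
    {T : (Fin (d + 2) → ZMod (c.natAbs * n)) ≃ₗ[ZMod (c.natAbs * n)]
      (Fin (d + 2) → ZMod (c.natAbs * n))}
    (hT : ∀ φ, T φ = φ + Pi.single (Fin.last (d + 1)) (c * φ 0)) : orderOf T = n := by
  refine Nat.dvd_right_iff_eq.mp fun k => ?_
  have pow_eq_one : T ^ k = 1 ↔ (k * c : ZMod (c.natAbs * n)) = 0 := by
    refine ⟨fun h => ?_, fun h => LinearEquiv.ext fun φ => ?_⟩
    · simpa [h] using (pow_apply_eq_add_single hT k 1).symm
    · simp [pow_apply_eq_add_single hT, h]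
  have cast_eq_zero : (k * c : ZMod (c.natAbs * n)) = 0 ↔ (n : ℤ) ∣ k := by
    rw [← Int.cast_natCast k, ← Int.cast_mul, ZMod.intCast_zmod_eq_zero_iff_dvd, mul_comm (k : ℤ),
      ← Int.natAbs_dvd_natAbs, ← Int.natAbs_dvd_natAbs, Int.natAbs_mul]
    exact Nat.mul_dvd_mul_iff_left (Int.natAbs_pos.mpr hc)
  rw [orderOf_dvd_iff_pow_eq_one, pow_eq_one, cast_eq_zero, Int.natCast_dvd_natCast]

open Classical in
theorem magnusRep_of_zpow_apply (hy : ∀ j x, y j = some x → y (j + 1) ≠ some x) (x : α) (e : ℤ)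
    (φ : Fin (d + 1) → R) : magnusRep R d y (FreeGroup.of x ^ e) φ =
      (Fin.cons (φ 0) fun j : Fin d =>
        φ j.succ + if y j = some x then e * φ j.castSucc else 0 : Fin (d + 1) → R) := by
  let T (e : ℤ) : Fin (d + 1) → R := Fin.cons (φ 0) fun j : Fin d =>
    φ j.succ + if y j = some x then e * φ j.castSucc else 0
  have fixed (e : ℤ) : ∀ j : Fin d, y j = some x → T e j.castSucc = φ j.castSucc
    | ⟨0, _⟩, _ => rfl
    | ⟨j + 1, hj⟩, hx => by
      have : y j ≠ some x := fun h => hy j x h hx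
      change φ _ + ite (y j = some x) _ _ = _
      rw [if_neg this, add_zero]
      rfl
  have succ_T (e : ℤ) : magnusRep R d y (FreeGroup.of x) (T e) = T (e + 1) := by
    funext j
    refine Fin.cases (magnusRep_of_apply_zero x _) (fun j => ?_) j
    rw [magnusRep_of_apply_succ]
    split_ifs with hx
    · simp only [fixed e j hx, T, Fin.cons_succ, if_pos hx]
      push_cast
      ring
    · simp only [T, Fin.cons_succ, if_neg hx, add_zero]
  change _ = T e
  induction e with
  | zero =>
    funext j
    refine Fin.cases rfl (fun j => ?_) j
    simp [T]
  | succ e ih => rw [zpow_add_one, (Commute.self_zpow _ _).eq.symm, map_mul, LinearEquiv.mul_apply,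
      ih, succ_T]
  | pred e ih =>
    rw [← (magnusRep R d y (FreeGroup.of x)).injective.eq_iff, succ_T, sub_add_cancel, ← ih,
      ← LinearEquiv.mul_apply, ← map_mul, ← zpow_one_add, add_sub_cancel]

theorem exists_syllables (g : FreeGroup α) : ∃ L : List (α × ℤ),
    (L.map Prod.fst).IsChain (· ≠ ·) ∧ (∀ s ∈ L, s.2 ≠ 0) ∧
      (L.map fun s => FreeGroup.of s.1 ^ s.2).prod = g := by
  classical
  let w := CoprodI.Word.equiv (freeGroupEquivCoprodI g)
  let e (u : FreeGroup Unit) : ℤ := FreeGroup.freeGroupUnitEquivInt u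
  have of_zpow (u : FreeGroup Unit) : FreeGroup.of () ^ e u = u :=
    FreeGroup.freeGroupUnitEquivInt.symm_apply_apply u
  refine ⟨w.toList.map fun s => (s.1, e s.2), ?_, ?_, ?_⟩
  · rw [List.map_map, List.isChain_map]
    exact w.chain_ne
  · simp only [List.mem_map, forall_exists_index, and_imp, forall_apply_eq_imp_iff₂]
    intro s hs h
    exact w.ne_one s hs (by rw [← of_zpow s.2, h, zpow_zero])
  · apply freeGroupEquivCoprodI.injective
    rw [map_list_prod, List.map_map, List.map_map]
    have : freeGroupEquivCoprodI g = w.prod := (CoprodI.Word.equiv.symm_apply_apply _).symm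
    rw [this, CoprodI.Word.prod]
    congr 1
    refine List.map_congr_left fun s _ => ?_
    rw [Function.comp_apply, Function.comp_apply, map_zpow, freeGroupEquivCoprodI_apply,
      FreeGroup.lift_apply_of, ← map_zpow, of_zpow]

theorem magnusRep_syllables_apply (hy : ∀ j x, y j = some x → y (j + 1) ≠ some x)
    (L : List (α × ℤ)) (hd : L.length ≤ d) (hL : ∀ j < L.length, y j = (L.reverse.map Prod.fst)[j]?)
    (j : Fin (d + 1)) (hj : L.length ≤ j) :
    magnusRep R d y (L.map fun s => FreeGroup.of s.1 ^ s.2).prod (Pi.single 0 1) j =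
      if (j : ℕ) = L.length then ((L.map Prod.snd).prod : R) else 0 := by
  classical
  induction L generalizing j with
  | nil =>
    rw [List.map_nil, List.prod_nil, map_one, LinearEquiv.coe_one, id, Pi.single_apply]
    simp only [Fin.ext_iff, Fin.val_zero, List.length_nil, List.map_nil, List.prod_nil,
      Int.cast_one]
  | cons s L ih =>
    obtain ⟨j, rfl⟩ := Fin.exists_succ_eq.mpr (show j ≠ 0 by rintro rfl; simp at hj)
    rw [List.length_cons] at hd hj hL ⊢
    specialize ih (by lia) fun j hj => by
      rw [hL j (by lia), List.reverse_cons, List.map_append, List.getElem?_append_left (by simpa)]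
    rw [List.map_cons, List.prod_cons, map_mul, LinearEquiv.mul_apply, magnusRep_of_zpow_apply hy,
      Fin.cons_succ, ih _ (by simp at hj ⊢; lia), ih _ (by simpa using hj)]
    have hj' : L.length ≤ (j : ℕ) := by simpa using hj
    rw [Fin.val_succ, Fin.val_castSucc, if_neg (by lia), zero_add]
    by_cases h : (j : ℕ) = L.length
    · have hyj : y j = some s.1 := by
        rw [hL j (by lia), h]
        simp
      rw [if_pos hyj, if_pos h, if_pos (congrArg (· + 1) h), List.map_cons, List.prod_cons,
        Int.cast_mul]
    · rw [if_neg h, mul_zero, ite_self, if_neg (by lia)]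

/-- The letters of a list of syllables, read from right to left; as labels for `magnusRep` they
select the Magnus coefficient of the product at the word with these letters. -/
def syllableLabel (L : List (α × ℤ)) (j : ℕ) : Option α := (L.reverse.map Prod.fst)[j]?

theorem syllableLabel_succ_ne {L : List (α × ℤ)} (hL : (L.map Prod.fst).IsChain (· ≠ ·)) (j : ℕ)
    (x : α) (h : syllableLabel L j = some x) : syllableLabel L (j + 1) ≠ some x := by
  intro h'
  have hL : (L.reverse.map Prod.fst).IsChain (· ≠ ·) := by
    rw [List.map_reverse, List.isChain_reverse]
    exact hL.imp fun _ _ h => h.symm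
  obtain ⟨_, h⟩ := List.getElem?_eq_some_iff.mp h
  obtain ⟨hj, h'⟩ := List.getElem?_eq_some_iff.mp h'
  exact List.isChain_iff_getElem.mp hL j hj (h.trans h'.symm)

theorem magnusRep_syllables_apply_last {L : List (α × ℤ)}
    (hL : (L.map Prod.fst).IsChain (· ≠ ·)) :
    magnusRep R L.length (syllableLabel L) (L.map fun s => FreeGroup.of s.1 ^ s.2).prod
      (Pi.single 0 1) (Fin.last _) = ((L.map Prod.snd).prod : R) := by
  rw [magnusRep_syllables_apply (syllableLabel_succ_ne hL) L le_rfl (fun _ _ => rfl) _ le_rfl,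
    Fin.val_last, if_pos rfl]

theorem prod_map_snd_ne_zero {L : List (α × ℤ)} (hL : ∀ s ∈ L, s.2 ≠ 0) :
    (L.map Prod.snd).prod ≠ 0 := by
  rw [Ne, List.prod_eq_zero_iff, List.mem_map]
  exact fun ⟨s, hs, h0⟩ => hL s hs h0

theorem exists_magnusRep_ne_one {g : FreeGroup α} (hg : g ≠ 1) :
    ∃ (d : ℕ) (y : ℕ → Option α), magnusRep ℤ d y g ≠ 1 := by
  obtain ⟨L, hchain, hne, rfl⟩ := exists_syllables g
  refine ⟨L.length, syllableLabel L, fun h => ?_⟩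
  have := magnusRep_syllables_apply_last (R := ℤ) hchain
  rw [h, LinearEquiv.coe_one, id, Int.cast_id] at this
  have hL : L.length ≠ 0 := fun h => hg (by simp [List.length_eq_zero_iff.mp h])
  refine prod_map_snd_ne_zero hne (this.symm.trans (Pi.single_eq_of_ne (fun h => hL ?_) _))
  simpa using congrArg Fin.val h

/- If `d + 1` is the least degree in which `g` acts nontrivially, then `g` acts there as the
elementary matrix `1 + c E`, whose order modulo `c n` is `n`. -/
theorem exists_finite_orderOf_eq {g : FreeGroup α} (hg : g ≠ 1) {n : ℕ} (hn : 0 < n) :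
    ∃ (Γ : Type) (_ : Group Γ) (_ : Finite Γ) (ψ : FreeGroup α →* Γ), orderOf (ψ g) = n := by
  classical
  have hex := exists_magnusRep_ne_one hg
  obtain ⟨y, hy⟩ := Nat.find_spec hex
  obtain ⟨d, hd⟩ : ∃ d, Nat.find hex = d + 1 :=
    Nat.exists_eq_succ_of_ne_zero fun h => hy (by rw [h, magnusRep_zero]; rfl)
  have hmin (y) : magnusRep ℤ d y g = 1 := by
    by_contra h
    exact Nat.find_min hex (hd ▸ d.lt_succ_self) ⟨y, h⟩
  rw [hd] at hy
  obtain ⟨c, hc⟩ := magnusRep_apply_eq_add_single (y := y) hmin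
  have hc0 : c ≠ 0 := by
    rintro rfl
    exact hy (LinearEquiv.ext fun φ => by simp [hc])
  have : NeZero (c.natAbs * n) := ⟨(Nat.mul_pos (Int.natAbs_pos.mpr hc0) hn).ne'⟩
  refine ⟨_, inferInstance, DFunLike.finite _, magnusRep (ZMod (c.natAbs * n)) (d + 1) y,
    orderOf_eq_of_apply_eq_add_single hc0 fun φ => ?_⟩
  obtain ⟨φ, rfl⟩ := (ZMod.intCast_surjective (n := c.natAbs * n)).comp_left φ
  have := map_magnusRep (y := y) (Int.castRingHom (ZMod (c.natAbs * n))) g φ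
  rw [hc] at this
  refine this.symm.trans (funext fun j => ?_)
  induction j using Fin.lastCases <;> simp

end Potency

section RankTwo

theorem finite_and_card_le_of_freeGroup_surjective {X Y : Type*} [Finite Y]
    {π : FreeGroup Y →* FreeGroup X} (hπ : Function.Surjective π) :
    Finite X ∧ Nat.card X ≤ Nat.card Y := by
  classical
  let Z := Multiplicative (ZMod 2)
  let res (f : X → Z) (y : Y) : Z := FreeGroup.lift f (π (FreeGroup.of y))
  have res_injective : Function.Injective res := fun f f' h => FreeGroup.lift.injective <|
    (MonoidHom.cancel_right hπ).mp <| FreeGroup.ext_hom _ _ fun y => congrFun h y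
  have : Finite Z := inferInstanceAs (Finite (ZMod 2))
  have : Finite (X → Z) := .of_injective res res_injective
  have : Finite X := by
    refine .of_injective (Pi.mulSingle · (Multiplicative.ofAdd (1 : ZMod 2)) : X → X → Z) ?_
    refine fun x x' h => by_contra fun hne => ?_
    have := congrFun h x
    simp only [Pi.mulSingle_eq_same, Pi.mulSingle_eq_of_ne hne] at this
    exact absurd this (by decide)
  refine ⟨this, (Nat.pow_le_pow_iff_right one_lt_two).mp ?_⟩
  have card_Z : Nat.card Z = 2 := Nat.card_zmod 2
  simpa only [Nat.card_fun, card_Z] using Nat.card_le_card_of_injective res res_injective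

/- Precomposition with `π` permutes the finitely many homomorphisms to any finite group, so those
all kill `ker π`. -/
theorem injective_of_freeGroup_surjective {X : Type*} [Finite X] {π : FreeGroup X →* FreeGroup X}
    (hπ : Function.Surjective π) : Function.Injective π := by
  refine (injective_iff_map_eq_one π).mpr fun g hg => ?_
  by_contra hne
  obtain ⟨Γ, _, _, ψ, hψ⟩ := exists_finite_orderOf_eq hne two_pos
  have : Finite (FreeGroup X →* Γ) := .of_equiv (X → Γ) FreeGroup.lift
  obtain ⟨θ, rfl⟩ := Finite.injective_iff_surjective.mp
    (fun _ _ => (MonoidHom.cancel_right hπ).mp : Function.Injective fun θ : _ →* Γ => θ.comp π) ψ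
  rw [MonoidHom.comp_apply, hg, map_one, orderOf_one] at hψ
  exact absurd hψ (by decide)

theorem isCyclic_freeGroup (X : Type*) [Subsingleton X] : IsCyclic (FreeGroup X) := by
  rcases isEmpty_or_nonempty X with _ | ⟨⟨x⟩⟩
  · infer_instance
  · have := uniqueOfSubsingleton x
    exact (FreeGroup.mulEquivIntOfUnique (α := X)).isCyclic.mpr inferInstance

theorem injective_or_isCyclic_range {α : Type*} (φ : FreeGroup Bool →* FreeGroup α) :
    Function.Injective φ ∨ IsCyclic φ.range := by
  let E := IsFreeGroup.toFreeGroup φ.range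
  let π := E.toMonoidHom.comp φ.rangeRestrict
  have hπ : Function.Surjective π := E.surjective.comp φ.rangeRestrict_surjective
  obtain ⟨_, hcard⟩ := finite_and_card_le_of_freeGroup_surjective hπ
  rw [Nat.card_eq_two_iff.mpr ⟨true, false, by decide, by ext i; cases i <;> simp⟩] at hcard
  rcases hcard.eq_or_lt with hcard | hcard
  · left
    obtain ⟨e⟩ : Nonempty (IsFreeGroup.Generators φ.range ≃ Bool) :=
      Finite.card_eq.mp (by simpa using hcard)
    let E' := FreeGroup.freeGroupCongr e
    have : Function.Injective (E'.toMonoidHom.comp π) :=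
      injective_of_freeGroup_surjective (E'.surjective.comp hπ)
    have : Function.Injective φ.rangeRestrict := .of_comp (f := E) (.of_comp (f := E') this)
    exact φ.rangeRestrict_injective_iff.mp this
  · right
    have := Finite.card_le_one_iff_subsingleton.mp (Nat.le_of_lt_succ hcard)
    exact E.isCyclic.mpr (isCyclic_freeGroup _)

/-- The homomorphism from the free group of rank two sending its generators to `a` and `b`. -/
def pairLift {G : Type*} [Group G] (a b : G) : FreeGroup Bool →* G :=
  FreeGroup.lift fun i => cond i a b

section pairLift

variable {G : Type*} [Group G] (a b : G)

@[simp] theorem pairLift_of_true : pairLift a b (FreeGroup.of true) = a := FreeGroup.lift_apply_of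

@[simp] theorem pairLift_of_false : pairLift a b (FreeGroup.of false) = b := FreeGroup.lift_apply_of

theorem range_pairLift : (pairLift a b).range = closure {a, b} := by
  rw [pairLift, FreeGroup.range_lift_eq_closure]
  congr 1
  ext; simp [eq_comm, or_comm]

end pairLift

/-- The elements `a` and `b` freely generate a free group of rank two. -/
def FreePair {G : Type*} [Group G] (a b : G) : Prop := Function.Injective (pairLift a b)

namespace FreePair

variable {G : Type*} [Group G] {a f : G}

theorem eq_zero_of_conj_zpow_eq (h : FreePair a f) {x y : ℤ} (hxy : f * a ^ x * f⁻¹ = a ^ y) :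
    x = 0 ∧ y = 0 := by
  have hw : FreeGroup.of false * FreeGroup.of true ^ x * (FreeGroup.of false)⁻¹ =
      FreeGroup.of true ^ y := h (by simpa using hxy)
  have hxy : x = y := by
    simpa using congrArg (Multiplicative.toAdd ∘ pairLift (Multiplicative.ofAdd (1 : ℤ)) 1) hw
  have h2xy : 2 * (x : ℚ) = y := by
    simpa using congrArg (fun w => pairLift (Equiv.addRight (1 : ℚ))
      (Equiv.mulLeft₀ (2 : ℚ) two_ne_zero) w 0) hw
  subst hxy
  have : (x : ℚ) = 0 := by linarith
  exact ⟨mod_cast this, mod_cast this⟩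

theorem eq_zero_of_zpow_eq_zpow (h : FreePair a f) {k l : ℤ} (hkl : f ^ k = a ^ l) : l = 0 := by
  have hw : FreeGroup.of false ^ k = FreeGroup.of true ^ l := h (by simpa using hkl)
  simpa using (congrArg (Multiplicative.toAdd ∘ pairLift (Multiplicative.ofAdd (1 : ℤ)) 1) hw).symm

theorem conj_notMem_zpowers (h : FreePair a f) : f * a * f⁻¹ ∉ zpowers a := by
  rintro ⟨y, hy⟩
  exact one_ne_zero (h.eq_zero_of_conj_zpow_eq (x := 1) (y := y) (by simpa using hy.symm)).1

theorem zpow_mul_zpow_inj (h : FreePair a f) {x y x' y' : ℤ}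
    (heq : a ^ x * f * a ^ y = a ^ x' * f * a ^ y') : x = x' ∧ y = y' := by
  have : f * a ^ (y - y') * f⁻¹ = a ^ (x' - x) := by
    have : a ^ (-x) * (a ^ x * f * a ^ y) * a ^ (-y') * f⁻¹ =
        a ^ (-x) * (a ^ x' * f * a ^ y') * a ^ (-y') * f⁻¹ := by rw [heq]
    convert this using 1 <;> group
  have := h.eq_zero_of_conj_zpow_eq this
  lia

end FreePair

namespace NotProperPower

variable {α : Type} {a f : FreeGroup α}

theorem freePair (hp : NotProperPower a) (ha : a ≠ 1) (hf : f ∉ zpowers a) : FreePair a f := by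
  refine (injective_or_isCyclic_range (pairLift a f)).resolve_right fun hcyc => hf ?_
  obtain ⟨z, hz⟩ := (Subgroup.isCyclic_iff_exists_zpowers_eq_top _).mp hcyc
  rw [range_pairLift] at hz
  obtain ⟨m, rfl⟩ : a ∈ zpowers z := hz ▸ subset_closure (by simp)
  obtain ⟨n, rfl⟩ : f ∈ zpowers z := hz ▸ subset_closure (by simp)
  have hm : m = 0 ∨ m = 1 ∨ m = -1 := by
    have := hp z m rfl
    lia
  rcases hm with rfl | rfl | rfl
  · exact absurd (zpow_zero z) ha
  · exact ⟨n, by simp⟩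
  · exact ⟨-n, by simp⟩

theorem mem_zpowers_of_zpow_eq_zpow (hp : NotProperPower a) (ha : a ≠ 1) {k l : ℤ} (hl : l ≠ 0)
    (h : f ^ k = a ^ l) : f ∈ zpowers a := by
  by_contra hf
  exact hl ((hp.freePair ha hf).eq_zero_of_zpow_eq_zpow h)

end NotProperPower

end RankTwo

section Separability

theorem exists_finite_stabilizer {α : Type} (H : Subgroup (FreeGroup α))
    (W : Finset (FreeGroup α)) :
    ∃ (T : Type) (_ : Finite T) (t : T) (ψ : FreeGroup α →* Equiv.Perm T),
      ∀ w ∈ W, ψ w t = t ↔ w ∈ H := by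
  obtain ⟨T, ht, ψ, hψ⟩ := exists_finite_truncation ((1 : FreeGroup α) : FreeGroup α ⧸ H) W
  refine ⟨T, inferInstance, ⟨_, ht⟩, ψ, fun w hw => ?_⟩
  rw [Subtype.ext_iff, hψ w hw, MulAction.Quotient.smul_coe, eq_comm, QuotientGroup.eq]
  simp

theorem exists_finite_forall_ne_zpow {α : Type} {a f : FreeGroup α} (hf : f ∉ zpowers a) :
    ∃ (Γ : Type) (_ : Group Γ) (_ : Finite Γ) (ψ : FreeGroup α →* Γ),
      ∀ x : ℤ, ψ f ≠ ψ (a ^ x) := by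
  classical
  obtain ⟨T, _, t, ψ, hψ⟩ := exists_finite_stabilizer (zpowers a) {a, f}
  refine ⟨Equiv.Perm T, inferInstance, inferInstance, ψ, fun x hx => hf ?_⟩
  have ha : ψ a t = t := (hψ a (by simp)).mpr (mem_zpowers a)
  rw [← hψ f (by simp), hx, map_zpow]
  exact Equiv.Perm.zpow_apply_eq_self_of_apply_eq_self ha x

theorem exists_finite_zpow_mul_mul_zpow_mem_closure {α : Type} (a b g : FreeGroup α) {m : ℕ}
    (hm : 0 < m) :
    ∃ (Γ : Type) (_ : Group Γ) (_ : Finite Γ) (ψ : FreeGroup α →* Γ),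
      ∀ x y : ℤ, ψ g = ψ (a ^ x * b ^ y) → ∃ x₀ y₀ : ℤ, x₀ ≡ x [ZMOD m] ∧ y₀ ≡ y [ZMOD m] ∧
        a ^ (-x₀) * g * b ^ (-y₀) ∈ closure {a ^ m, b ^ m} := by
  classical
  let r (x y : ℤ) : FreeGroup α := a ^ (-x) * g * b ^ (-y)
  let W : Finset (FreeGroup α) :=
    (Finset.Ico (0 : ℤ) m ×ˢ Finset.Ico (0 : ℤ) m).image fun p => r p.1 p.2
  obtain ⟨T, _, t, ψ, hψ⟩ := exists_finite_stabilizer (closure {a ^ m, b ^ m}) ({a ^ m, b ^ m} ∪ W)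
  refine ⟨Equiv.Perm T, inferInstance, inferInstance, ψ, fun x y hxy =>
    ⟨x % m, y % m, Int.mod_modEq x m, Int.mod_modEq y m, (hψ _ ?_).mp ?_⟩⟩
  · have hm' : (0 : ℤ) < m := mod_cast hm
    refine Finset.mem_union_right _ (Finset.mem_image.mpr ⟨(x % m, y % m), ?_, rfl⟩)
    simp only [Finset.mem_product, Finset.mem_Ico]
    exact ⟨⟨Int.emod_nonneg x hm'.ne', Int.emod_lt_of_pos x hm'⟩,
      Int.emod_nonneg y hm'.ne', Int.emod_lt_of_pos y hm'⟩
  · have ha : ψ (a ^ m) t = t := (hψ _ (by simp)).mpr (subset_closure (by simp))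
    have hb : ψ (b ^ m) t = t := (hψ _ (by simp)).mpr (subset_closure (by simp))
    have ha_split : a ^ x = a ^ (x % m) * (a ^ m) ^ (x / m) := by
      rw [← zpow_natCast a m, ← zpow_mul, ← zpow_add, Int.emod_add_mul_ediv]
    have hb_split : b ^ y = (b ^ m) ^ (y / m) * b ^ (y % m) := by
      rw [← zpow_natCast b m, ← zpow_mul, ← zpow_add, Int.mul_ediv_add_emod]
    have : ψ (r (x % m) (y % m)) = ψ (a ^ m) ^ (x / m) * ψ (b ^ m) ^ (y / m) := by
      rw [map_mul, map_mul, hxy, ← map_zpow, ← map_zpow, ← map_mul, ← map_mul, ← map_mul, ha_split,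
        hb_split]
      group
    change ψ (r (x % m) (y % m)) t = t
    rw [this, Equiv.Perm.mul_apply, Equiv.Perm.zpow_apply_eq_self_of_apply_eq_self hb,
      Equiv.Perm.zpow_apply_eq_self_of_apply_eq_self ha]

theorem exists_eq_zpow_mul_syllables_mul_zpow (g : FreeGroup Bool) :
    ∃ (x y : ℤ) (L : List (Bool × ℤ)), (true :: (L.map Prod.fst ++ [false])).IsChain (· ≠ ·) ∧
      (∀ s ∈ L, s.2 ≠ 0) ∧
      g = FreeGroup.of true ^ x * (L.map fun s => FreeGroup.of s.1 ^ s.2).prod *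
        FreeGroup.of false ^ y := by
  obtain ⟨L, hchain, hne, rfl⟩ := exists_syllables g
  obtain ⟨x, L, hchain, hne, h⟩ : ∃ (x : ℤ) (L' : List (Bool × ℤ)),
      (true :: L'.map Prod.fst).IsChain (· ≠ ·) ∧ (∀ s ∈ L', s.2 ≠ 0) ∧
      (L.map fun s => FreeGroup.of s.1 ^ s.2).prod =
        FreeGroup.of true ^ x * (L'.map fun s => FreeGroup.of s.1 ^ s.2).prod := by
    rcases L with _ | ⟨⟨_ | _, e⟩, L⟩
    · exact ⟨0, [], by simp⟩
    · exact ⟨0, _, List.isChain_cons_cons.mpr ⟨Bool.noConfusion, hchain⟩, hne, by simp⟩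
    · exact ⟨e, L, hchain, fun s hs => hne s (List.mem_cons_of_mem _ hs), by simp⟩
  rw [h]
  rcases L.eq_nil_or_concat with rfl | ⟨L, ⟨_ | _, e⟩, rfl⟩
  · exact ⟨x, 0, [], by simp⟩
  · refine ⟨x, e, L, by simpa using hchain, fun s hs => hne s (by simp [hs]), by simp [mul_assoc]⟩
  · refine ⟨x, 0, _, ?_, hne, by simp⟩
    rw [List.map_concat, List.concat_eq_append, ← List.cons_append] at hchain ⊢
    exact hchain.append (List.isChain_singleton _) (by simp [List.getLast?_cons])

section Magnus

variable {α R : Type*} [CommRing R] {d : ℕ} {y : ℕ → Option α}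
  (hy : ∀ j x, y j = some x → y (j + 1) ≠ some x)

include hy

theorem magnusRep_of_zpow_apply_single {x : α} (hx : y 0 ≠ some x) (e : ℤ) (c : R) :
    magnusRep R d y (FreeGroup.of x ^ e) (Pi.single 0 c) = Pi.single 0 c := by
  rw [magnusRep_of_zpow_apply hy]
  refine funext <| Fin.cases (by simp) fun j => ?_
  classical
  rw [Fin.cons_succ, add_eq_left, ite_eq_right_iff]
  intro hj
  have : j.castSucc ≠ 0 := fun h => hx (by simpa [← Fin.val_castSucc j, h] using hj)
  rw [Pi.single_eq_of_ne this, mul_zero]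

theorem magnusRep_of_zpow_apply_last {x : α} (hx : y d ≠ some x) (e : ℤ) (φ : Fin (d + 2) → R) :
    magnusRep R (d + 1) y (FreeGroup.of x ^ e) φ (Fin.last _) = φ (Fin.last _) := by
  rw [magnusRep_of_zpow_apply hy, ← Fin.succ_last, Fin.cons_succ, Fin.val_last, if_neg hx, add_zero]

theorem magnusRep_of_pow_char (m : ℕ) [CharP R m] (x : α) :
    magnusRep R d y (FreeGroup.of x) ^ m = 1 := by
  rw [← map_pow, ← zpow_natCast]
  refine LinearEquiv.ext fun φ => ?_
  rw [magnusRep_of_zpow_apply hy]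
  refine funext <| Fin.cases (by simp) fun j => by simp

end Magnus

namespace FreePair

variable {G : Type*} [Group G] {a b : G}

theorem pairLift_eq_one_of_mem_closure_pow (h : FreePair a b) {m : ℕ} {w : FreeGroup Bool}
    (hw : pairLift a b w ∈ closure {a ^ m, b ^ m}) {K : Type*} [Group K]
    {θ : FreeGroup Bool →* K} (hθ : ∀ i, θ (FreeGroup.of i) ^ m = 1) : θ w = 1 := by
  let P : Subgroup (FreeGroup Bool) := closure {FreeGroup.of true ^ m, FreeGroup.of false ^ m}
  have hP : closure {a ^ m, b ^ m} = P.map (pairLift a b) := by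
    simp [P, MonoidHom.map_closure, Set.image_pair]
  obtain ⟨w', hw', heq⟩ := hP ▸ hw
  obtain rfl := h heq
  have : P ≤ θ.ker := by
    rw [closure_le, Set.pair_subset_iff]
    constructor <;> simp [hθ]
  exact this hw'

theorem dvd_of_zpow_mul_zpow_mem_closure_pow (h : FreePair a b) {m : ℕ} {x y : ℤ}
    (hxy : a ^ x * b ^ y ∈ closure {a ^ m, b ^ m}) : (m : ℤ) ∣ x ∧ (m : ℤ) ∣ y := by
  let w : FreeGroup Bool := FreeGroup.of true ^ x * FreeGroup.of false ^ y
  have hw : pairLift a b w ∈ closure {a ^ m, b ^ m} := by simpa [w] using hxy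
  have hx := h.pairLift_eq_one_of_mem_closure_pow hw
    (θ := pairLift (Multiplicative.ofAdd (1 : ZMod m)) 1) (by simp [← ofAdd_nsmul])
  have hy := h.pairLift_eq_one_of_mem_closure_pow hw
    (θ := pairLift 1 (Multiplicative.ofAdd (1 : ZMod m))) (by simp [← ofAdd_nsmul])
  simpa [w, ← ofAdd_zsmul, ZMod.intCast_zmod_eq_zero_iff_dvd] using And.intro hx hy

/- After splitting off powers of the generators at both ends, `w` has a Magnus coefficient which is
unchanged by multiplication with such powers, and any modulus not dividing it will do. -/
theorem exists_notMem_closure_pow_of_pairLift (h : FreePair a b) {w : FreeGroup Bool}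
    (hw : ∀ p q : ℤ, w ≠ FreeGroup.of true ^ p * FreeGroup.of false ^ q) :
    ∃ m, 0 < m ∧ ∀ x y : ℤ, a ^ x * pairLift a b w * b ^ y ∉ closure {a ^ m, b ^ m} := by
  obtain ⟨x, y, _ | ⟨s, L⟩, hchain, hne, rfl⟩ := exists_eq_zpow_mul_syllables_mul_zpow w
  · exact absurd (by simp) (hw x y)
  set P := ((s :: L).map fun s => FreeGroup.of s.1 ^ s.2).prod
  set c := ((s :: L).map Prod.snd).prod
  have hc : c.natAbs ≠ 0 := Int.natAbs_ne_zero.mpr (prod_map_snd_ne_zero hne)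
  obtain ⟨hhead, hchain⟩ := List.isChain_cons_cons.mp hchain
  obtain ⟨hchain, -, hlast⟩ := List.isChain_append.mp
    (show ((s :: L).map Prod.fst ++ [false]).IsChain (· ≠ ·) from hchain)
  have hlabel := syllableLabel_succ_ne hchain
  have label_zero : syllableLabel (s :: L) 0 ≠ some false := fun h =>
    hlast false (by
      rwa [syllableLabel, ← List.head?_eq_getElem?, List.map_reverse, List.head?_reverse] at h)
      false (by simp) rfl
  have label_length : syllableLabel (s :: L) L.length ≠ some true := by
    simpa [syllableLabel] using hhead.symm
  refine ⟨c.natAbs + 1, by lia, fun x₀ y₀ hmem => ?_⟩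
  let θ := magnusRep (ZMod (c.natAbs + 1)) (L.length + 1) (syllableLabel (s :: L))
  let w := FreeGroup.of true ^ (x₀ + x) * P * FreeGroup.of false ^ (y + y₀)
  have hw : θ w = 1 := by
    refine h.pairLift_eq_one_of_mem_closure_pow (m := c.natAbs + 1) ?_
      fun i => magnusRep_of_pow_char hlabel _ i
    simpa [w, zpow_add, mul_assoc] using hmem
  have : (c : ZMod (c.natAbs + 1)) = 0 :=
    calc (c : ZMod (c.natAbs + 1)) = θ P (Pi.single 0 1) (Fin.last _) :=
          (magnusRep_syllables_apply_last hchain).symm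
      _ = θ w (Pi.single 0 1) (Fin.last _) := by
        simp only [w, map_mul, LinearEquiv.mul_apply]
        rw [magnusRep_of_zpow_apply_last hlabel label_length,
          magnusRep_of_zpow_apply_single hlabel label_zero]
      _ = 0 := by simp [hw]
  rw [ZMod.intCast_zmod_eq_zero_iff_dvd, Int.natCast_dvd] at this
  exact absurd (Nat.le_of_dvd (by lia) this) (by lia)

theorem exists_notMem_closure_pow (h : FreePair a b) {g : G}
    (hg : ∀ p q : ℤ, g ≠ a ^ p * b ^ q) :
    ∃ m, 0 < m ∧ ∀ x y : ℤ, a ^ x * g * b ^ y ∉ closure {a ^ m, b ^ m} := by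
  by_cases hmem : g ∈ closure {a, b}
  · rw [← range_pairLift] at hmem
    obtain ⟨w, rfl⟩ := hmem
    refine h.exists_notMem_closure_pow_of_pairLift fun p q hw => hg p q ?_
    simp [hw]
  · refine ⟨1, one_pos, fun x y hxy => hmem ?_⟩
    rw [pow_one, pow_one] at hxy
    have ha : a ^ x ∈ closure {a, b} := zpow_mem (subset_closure (by simp)) x
    have hb : b ^ y ∈ closure {a, b} := zpow_mem (subset_closure (by simp)) y
    exact (mul_mem_cancel_left ha).mp ((mul_mem_cancel_right hb).mp hxy)

theorem exists_finite_eq_zpow_mul_zpow {α : Type} {a b : FreeGroup α} (h : FreePair a b)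
    (g : FreeGroup α) {M : ℕ} (hM : 0 < M) :
    ∃ (Γ : Type) (_ : Group Γ) (_ : Finite Γ) (ψ : FreeGroup α →* Γ),
      ∀ x y : ℤ, ψ g = ψ (a ^ x * b ^ y) →
        ∃ x' y' : ℤ, x' ≡ x [ZMOD M] ∧ y' ≡ y [ZMOD M] ∧ g = a ^ x' * b ^ y' := by
  by_cases hg : ∃ p q : ℤ, g = a ^ p * b ^ q
  · obtain ⟨p, q, rfl⟩ := hg
    obtain ⟨Γ, _, _, ψ, hψ⟩ := exists_finite_zpow_mul_mul_zpow_mem_closure a b (a ^ p * b ^ q) hM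
    refine ⟨Γ, inferInstance, inferInstance, ψ, fun x y hxy => ⟨p, q, ?_, ?_, rfl⟩⟩ <;>
      obtain ⟨x₀, y₀, hx, hy, hmem⟩ := hψ x y hxy <;>
      have hdvd := h.dvd_of_zpow_mul_zpow_mem_closure_pow (x := p - x₀) (y := q - y₀)
        (by rwa [sub_eq_neg_add, sub_eq_add_neg, zpow_add, zpow_add, mul_assoc, ← mul_assoc (a ^ p),
          ← mul_assoc])
    · exact (Int.modEq_iff_dvd.mpr hdvd.1).symm.trans hx
    · exact (Int.modEq_iff_dvd.mpr hdvd.2).symm.trans hy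
  · obtain ⟨m, hm, hmem⟩ := h.exists_notMem_closure_pow fun p q hpq => hg ⟨p, q, hpq⟩
    obtain ⟨Γ, _, _, ψ, hψ⟩ := exists_finite_zpow_mul_mul_zpow_mem_closure a b g hm
    refine ⟨Γ, inferInstance, inferInstance, ψ, fun x y hxy => ?_⟩
    obtain ⟨x₀, y₀, -, -, hx₀y₀⟩ := hψ x y hxy
    exact absurd hx₀y₀ (hmem _ _)

end FreePair

variable {α : Type} {a : FreeGroup α}

theorem NotProperPower.exists_finite_eq_zpow_mul_mul_zpow (hp : NotProperPower a) (ha : a ≠ 1)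
    {f : FreeGroup α} (hf : f ∉ zpowers a) (f' : FreeGroup α) {M : ℕ} (hM : 0 < M) :
    ∃ (Γ : Type) (_ : Group Γ) (_ : Finite Γ) (ψ : FreeGroup α →* Γ),
      ∀ x y : ℤ, ψ f' = ψ (a ^ x * f * a ^ y) →
        ∃ x' y' : ℤ, x' ≡ x [ZMOD M] ∧ y' ≡ y [ZMOD M] ∧ f' = a ^ x' * f * a ^ y' := by
  have hfree : FreePair a (f * a * f⁻¹) :=
    hp.freePair ha (hp.freePair ha hf).conj_notMem_zpowers
  have conj_zpow_mul (x y : ℤ) : a ^ x * (f * a * f⁻¹) ^ y = a ^ x * f * a ^ y * f⁻¹ := by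
    rw [conj_zpow]
    group
  obtain ⟨Γ, _, _, ψ, hψ⟩ := hfree.exists_finite_eq_zpow_mul_zpow (f' * f⁻¹) hM
  refine ⟨Γ, inferInstance, inferInstance, ψ, fun x y hxy => ?_⟩
  obtain ⟨x', y', hx, hy, heq⟩ := hψ x y (by rw [conj_zpow_mul, map_mul, hxy, ← map_mul])
  exact ⟨x', y', hx, hy, mul_right_cancel (heq.trans (conj_zpow_mul x' y'))⟩

theorem exists_finite_forall_of_forall_exists {G ι T : Type} [Group G] [Finite ι] {g h : ι → T → G}
    {C : ι → T → Prop}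
    (H : ∀ i, ∃ (Γ : Type) (_ : Group Γ) (_ : Finite Γ) (ψ : G →* Γ),
      ∀ t, ψ (g i t) = ψ (h i t) → C i t) :
    ∃ (Γ : Type) (_ : Group Γ) (_ : Finite Γ) (ψ : G →* Γ),
      ∀ i t, ψ (g i t) = ψ (h i t) → C i t := by
  choose Γ _ _ ψ hψ using H
  exact ⟨∀ i, Γ i, inferInstance, inferInstance, MonoidHom.pi ψ,
    fun i t heq => hψ i t (congrFun heq i)⟩

theorem NotProperPower.exists_finite_separating (hp : NotProperPower a) (ha : a ≠ 1)
    {S : Set (FreeGroup α)} (hfin : S.Finite) (hS : ∀ f ∈ S, f ∉ zpowers a) {M : ℕ} (hM : 0 < M) :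
    ∃ (Γ : Type) (_ : Group Γ) (_ : Finite Γ) (ψ : FreeGroup α →* Γ),
      (∀ f ∈ S, ∀ x : ℤ, ψ f ≠ ψ (a ^ x)) ∧
      ∀ f ∈ S, ∀ f' ∈ S, ∀ x y : ℤ, ψ f' = ψ (a ^ x * f * a ^ y) →
        ∃ x' y' : ℤ, x' ≡ x [ZMOD M] ∧ y' ≡ y [ZMOD M] ∧ f' = a ^ x' * f * a ^ y' := by
  have : Finite S := hfin
  obtain ⟨Γ₁, _, _, ψ₁, h₁⟩ := exists_finite_forall_of_forall_exists (ι := S) (T := ℤ)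
    (g := fun f _ => (f : FreeGroup α)) (h := fun _ x => a ^ x) (C := fun _ _ => False)
    fun f => exists_finite_forall_ne_zpow (hS f f.2)
  obtain ⟨Γ₂, _, _, ψ₂, h₂⟩ := exists_finite_forall_of_forall_exists (ι := S × S) (T := ℤ × ℤ)
    (g := fun f _ => (f.2 : FreeGroup α)) (h := fun f x => a ^ x.1 * f.1 * a ^ x.2)
    (C := fun f x => ∃ x' y' : ℤ, x' ≡ x.1 [ZMOD M] ∧ y' ≡ x.2 [ZMOD M] ∧
      (f.2 : FreeGroup α) = a ^ x' * f.1 * a ^ y') fun f => by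
      obtain ⟨Γ, _, _, ψ, hψ⟩ := hp.exists_finite_eq_zpow_mul_mul_zpow ha (hS f.1 f.1.2) f.2 hM
      exact ⟨Γ, inferInstance, inferInstance, ψ, fun x => hψ x.1 x.2⟩
  exact ⟨Γ₁ × Γ₂, inferInstance, inferInstance, ψ₁.prod ψ₂,
    fun f hf x h => h₁ ⟨f, hf⟩ x (congrArg Prod.fst h),
    fun f hf f' hf' x y h => h₂ (⟨f, hf⟩, ⟨f', hf'⟩) (x, y) (congrArg Prod.snd h)⟩

end Separability

section FreeAction
variable {C Y ι : Type} [Group C] [MulAction C Y]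

open MulAction

theorem exists_orbit_section {A : ι → Y} (hA : ∀ i j, A i ∈ orbit C (A j) → i = j) :
    ∃ φ : orbitRel.Quotient C Y → Y,
      (∀ ω, Quotient.mk'' (φ ω) = ω) ∧ ∀ i, φ (Quotient.mk'' (A i)) = A i := by
  have hinj : Function.Injective fun i => (Quotient.mk'' (A i) : orbitRel.Quotient C Y) :=
    fun i j h => hA i j (orbitRel_apply.mp (Quotient.exact h))
  refine ⟨Function.extend (fun i => Quotient.mk'' (A i)) A Quotient.out, fun ω => ?_,
    fun i => hinj.extend_apply _ _ i⟩
  by_cases h : ∃ i, Quotient.mk'' (A i) = ω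
  · obtain ⟨i, rfl⟩ := h
    rw [hinj.extend_apply]
  · rw [Function.extend_apply' _ _ _ h]
    exact Quotient.out_eq ω

theorem bijective_smul_orbit_section (hfree : ∀ (c : C) (y : Y), c • y = y → c = 1)
    {φ : orbitRel.Quotient C Y → Y} (hφ : ∀ ω, Quotient.mk'' (φ ω) = ω) :
    Function.Bijective fun x : orbitRel.Quotient C Y × C => x.2 • φ x.1 := by
  have mk_smul (c : C) (ω) : (Quotient.mk'' (c • φ ω) : orbitRel.Quotient C Y) = ω := by
    conv_rhs => rw [← hφ ω]
    exact Quotient.sound (mem_orbit _ c)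
  constructor
  · rintro ⟨ω, c⟩ ⟨ω', c'⟩ h
    obtain rfl : ω = ω' := by rw [← mk_smul c ω, ← mk_smul c' ω']; exact congrArg _ h
    have : (c'⁻¹ * c) • φ ω = φ ω := by rw [mul_smul, inv_smul_eq_iff]; exact h
    rw [inv_mul_eq_one.mp (hfree _ _ this)]
  · intro y
    obtain ⟨c, hc⟩ : y ∈ orbit C (φ (Quotient.mk'' y)) :=
      orbitRel_apply.mp (Quotient.exact (hφ (Quotient.mk'' y)).symm)
    exact ⟨(_, c), hc⟩

theorem exists_perm_comp_eq_of_injective {X : Type} [Finite X] {f g : ι → X}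
    (hf : Function.Injective f) (hg : Function.Injective g) :
    ∃ σ : Equiv.Perm X, ∀ i, σ (f i) = g i := by
  classical
  refine ⟨((Equiv.ofInjective f hf).symm.trans (Equiv.ofInjective g hg)).extendSubtype,
    fun i => ?_⟩
  rw [Equiv.extendSubtype_apply_of_mem _ _ ⟨i, rfl⟩, Equiv.trans_apply,
    Equiv.ofInjective_symm_apply hf]
  rfl

theorem exists_equiv_map_smul_of_free {Y' : Type} [MulAction C Y'] [Finite C] [Finite Y]
    [Finite Y'] (hcard : Nat.card Y = Nat.card Y') (hY : ∀ (c : C) (y : Y), c • y = y → c = 1)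
    (hY' : ∀ (c : C) (y : Y'), c • y = y → c = 1) {A : ι → Y} {B : ι → Y'}
    (hA : ∀ i j, A i ∈ orbit C (A j) → i = j) (hB : ∀ i j, B i ∈ orbit C (B j) → i = j) :
    ∃ Θ : Y ≃ Y', (∀ (c : C) y, Θ (c • y) = c • Θ y) ∧ ∀ i, Θ (A i) = B i := by
  obtain ⟨φ, hφ, hφA⟩ := exists_orbit_section hA
  obtain ⟨φ', hφ', hφB⟩ := exists_orbit_section hB
  let E := Equiv.ofBijective _ (bijective_smul_orbit_section hY hφ)
  let E' := Equiv.ofBijective _ (bijective_smul_orbit_section hY' hφ')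
  have hQ : Nat.card (orbitRel.Quotient C Y) = Nat.card (orbitRel.Quotient C Y') := by
    rw [← Nat.card_congr E, ← Nat.card_congr E', Nat.card_prod, Nat.card_prod] at hcard
    exact Nat.eq_of_mul_eq_mul_right Nat.card_pos hcard
  obtain ⟨e⟩ := Finite.card_eq.mp hQ
  obtain ⟨r, hr⟩ := exists_perm_comp_eq_of_injective
    (f := fun i => e (Quotient.mk'' (A i))) (g := fun i => Quotient.mk'' (B i))
    (e.injective.comp fun i j h => hA i j (orbitRel_apply.mp (Quotient.exact h)))
    fun i j h => hB i j (orbitRel_apply.mp (Quotient.exact h))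
  let T := (e.trans r).prodCongr (Equiv.refl C)
  have smul_E (c : C) (x) : c • E x = E (x.1, c * x.2) := (mul_smul _ _ _).symm
  have smul_E' (c : C) (x) : c • E' x = E' (x.1, c * x.2) := (mul_smul _ _ _).symm
  refine ⟨(E.symm.trans T).trans E', fun c y => ?_, fun i => ?_⟩
  · obtain ⟨x, rfl⟩ := E.surjective y
    simp only [smul_E, smul_E', Equiv.trans_apply, Equiv.symm_apply_apply]
    rfl
  · have hA : E (Quotient.mk'' (A i), 1) = A i := (one_smul _ _).trans (hφA i)
    have hB : E' (Quotient.mk'' (B i), 1) = B i := (one_smul _ _).trans (hφB i)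
    rw [← hA, ← hB, Equiv.trans_apply, Equiv.trans_apply, Equiv.symm_apply_apply]
    exact congrArg (fun ω => E' (ω, 1)) (hr i)

end FreeAction

/-- `H` is the amalgamated product of `F₁` and `F₂` along `a = b`, with structure maps `ι₁` and
`ι₂`. Both factors play the same role here, so that arguments about `ι₁` apply to `ι₂` by
`IsAmalgam.symm`. -/
structure IsAmalgam {F₁ F₂ H : Type} [Group F₁] [Group F₂] [Group H] (a : F₁) (b : F₂)
    (ι₁ : F₁ →* H) (ι₂ : F₂ →* H) : Prop where
  map_eq : ι₁ a = ι₂ b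
  exists_lift : ∀ (K : Type) [Group K] (φ₁ : F₁ →* K) (φ₂ : F₂ →* K), φ₁ a = φ₂ b →
    ∃ Φ : H →* K, (∀ f, Φ (ι₁ f) = φ₁ f) ∧ ∀ h, Φ (ι₂ h) = φ₂ h
  range_sup_range : ι₁.range ⊔ ι₂.range = ⊤

/-- The action of `Γ` on `Γ × Z` by left multiplication on the first factor. -/
def leftMulPerm (Γ Z : Type) [Group Γ] : Γ →* Equiv.Perm (Γ × Z) where
  toFun g := (Equiv.mulLeft g).prodCongr (Equiv.refl Z)
  map_one' := by ext x <;> simp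
  map_mul' g h := by ext x <;> simp [mul_assoc]

theorem orderOf_leftMulPerm {Γ Z : Type} [Group Γ] [Nonempty Z] (g : Γ) :
    orderOf (leftMulPerm Γ Z g) = orderOf g := by
  refine orderOf_injective _ (fun g h hgh => ?_) g
  obtain ⟨z⟩ := ‹Nonempty Z›
  exact mul_right_cancel (congrArg Prod.fst (DFunLike.congr_fun hgh (1, z)))

theorem exists_equiv_leftMulPerm {Γ₁ Γ₂ Z ι : Type} [Group Γ₁] [Group Γ₂] [Finite Γ₁] [Finite Γ₂]
    [Finite Z] {a : Γ₁} {b : Γ₂} (hab : orderOf a = orderOf b)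
    {U : ι → Γ₁ × Γ₂ × Z} {V : ι → Γ₂ × Γ₁ × Z}
    (hU : ∀ i j (k : ℤ), (a ^ k * (U j).1, (U j).2) = U i → i = j)
    (hV : ∀ i j (k : ℤ), (b ^ k * (V j).1, (V j).2) = V i → i = j) :
    ∃ Θ : Γ₁ × Γ₂ × Z ≃ Γ₂ × Γ₁ × Z,
      (∀ x, Θ (leftMulPerm _ _ a x) = leftMulPerm _ _ b (Θ x)) ∧ ∀ i, Θ (U i) = V i := by
  let C := zpowers (a, b)
  let _ : MulAction C (Γ₁ × Γ₂ × Z) := MulAction.compHom _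
    ((leftMulPerm Γ₁ (Γ₂ × Z)).comp ((MonoidHom.fst Γ₁ Γ₂).comp C.subtype))
  let _ : MulAction C (Γ₂ × Γ₁ × Z) := MulAction.compHom _
    ((leftMulPerm Γ₂ (Γ₁ × Z)).comp ((MonoidHom.snd Γ₁ Γ₂).comp C.subtype))
  have zpow_eq_one_iff (k : ℤ) : a ^ k = 1 ↔ b ^ k = 1 := by
    rw [← orderOf_dvd_iff_zpow_eq_one, hab, orderOf_dvd_iff_zpow_eq_one]
  have free_left (c : C) (y : Γ₁ × Γ₂ × Z) (hy : c • y = y) : c = 1 := by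
    obtain ⟨_, k, rfl⟩ := c
    have ha : a ^ k = 1 := mul_eq_right.mp (congrArg Prod.fst hy)
    exact Subtype.ext (Prod.ext ha ((zpow_eq_one_iff k).mp ha))
  have free_right (c : C) (y : Γ₂ × Γ₁ × Z) (hy : c • y = y) : c = 1 := by
    obtain ⟨_, k, rfl⟩ := c
    have hb : b ^ k = 1 := mul_eq_right.mp (congrArg Prod.fst hy)
    exact Subtype.ext (Prod.ext ((zpow_eq_one_iff k).mpr hb) hb)
  obtain ⟨Θ, hΘ, hUV⟩ := exists_equiv_map_smul_of_free (A := U) (B := V)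
    (by simp only [Nat.card_prod]; ring) free_left free_right
    (by rintro i j ⟨⟨_, k, rfl⟩, hk⟩; exact hU i j k hk)
    (by rintro i j ⟨⟨_, k, rfl⟩, hk⟩; exact hV i j k hk)
  exact ⟨Θ, hΘ ⟨(a, b), mem_zpowers _⟩, hUV⟩

namespace IsAmalgam

variable {F₁ F₂ H : Type} [Group F₁] [Group F₂] [Group H] {a : F₁} {b : F₂} {ι₁ : F₁ →* H}
  {ι₂ : F₂ →* H}

theorem symm (A : IsAmalgam a b ι₁ ι₂) : IsAmalgam b a ι₂ ι₁ where
  map_eq := A.map_eq.symm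
  exists_lift K _ φ₂ φ₁ h := by
    obtain ⟨Φ, h₁, h₂⟩ := A.exists_lift K φ₁ φ₂ h.symm
    exact ⟨Φ, h₂, h₁⟩
  range_sup_range := by rw [sup_comm, A.range_sup_range]

variable {Γ₁ Γ₂ : Type} [Group Γ₁] [Group Γ₂] [Finite Γ₁] [Finite Γ₂] {ψ₁ : F₁ →* Γ₁}
  {ψ₂ : F₂ →* Γ₂}

/- The two free actions of `ψ₁ a` and `ψ₂ b` are isomorphic, and an isomorphism may be prescribed on
points of distinct orbits. -/
theorem exists_perm_rep (A : IsAmalgam a b ι₁ ι₂) {Z ι : Type} [Finite Z]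
    (hord : orderOf (ψ₁ a) = orderOf (ψ₂ b)) {U : ι → Γ₁ × Γ₂ × Z} {V : ι → Γ₂ × Γ₁ × Z}
    (hU : ∀ i j (k : ℤ), (ψ₁ a ^ k * (U j).1, (U j).2) = U i → i = j)
    (hV : ∀ i j (k : ℤ), (ψ₂ b ^ k * (V j).1, (V j).2) = V i → i = j) :
    ∃ (Θ : Γ₁ × Γ₂ × Z ≃ Γ₂ × Γ₁ × Z) (Φ : H →* Equiv.Perm (Γ₁ × Γ₂ × Z)),
      (∀ i, Θ (U i) = V i) ∧ (∀ f x, Φ (ι₁ f) x = (ψ₁ f * x.1, x.2)) ∧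
      ∀ h x, Θ (Φ (ι₂ h) x) = (ψ₂ h * (Θ x).1, (Θ x).2) := by
  obtain ⟨Θ, hΘ, hUV⟩ := exists_equiv_leftMulPerm hord hU hV
  obtain ⟨Φ, h₁, h₂⟩ := A.exists_lift _ ((leftMulPerm Γ₁ (Γ₂ × Z)).comp ψ₁)
    (Θ.symm.permCongrHom.toMonoidHom.comp ((leftMulPerm Γ₂ (Γ₁ × Z)).comp ψ₂))
    (Equiv.ext fun x => (Θ.symm_apply_eq.mpr (hΘ x).symm).symm)
  refine ⟨Θ, Φ, hUV, fun f x => ?_, fun h x => ?_⟩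
  · rw [h₁]
    rfl
  · rw [h₂]
    exact Θ.apply_symm_apply _

theorem exists_orderOf_map_eq (A : IsAmalgam a b ι₁ ι₂)
    (hord : orderOf (ψ₁ a) = orderOf (ψ₂ b)) :
    ∃ (X : Type) (_ : Finite X) (Φ : H →* Equiv.Perm X),
      (∀ f, orderOf (Φ (ι₁ f)) = orderOf (ψ₁ f)) ∧ ∀ h, orderOf (Φ (ι₂ h)) = orderOf (ψ₂ h) := by
  obtain ⟨Θ, Φ, -, h₁, h₂⟩ := A.exists_perm_rep (Z := Unit) (ι := Empty) hord
    (U := Empty.elim) (V := Empty.elim) (fun i => i.elim) (fun i => i.elim)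
  refine ⟨_, inferInstance, Φ, fun f => ?_, fun h => ?_⟩
  · rw [← orderOf_leftMulPerm (ψ₁ f) (Z := Γ₂ × Unit)]
    exact congrArg orderOf (Equiv.ext (h₁ f))
  · rw [← orderOf_leftMulPerm (ψ₂ h) (Z := Γ₁ × Unit), ← Θ.permCongrHom.orderOf_eq]
    refine congrArg orderOf (Equiv.ext fun y => ?_)
    exact (h₂ h (Θ.symm y)).trans (by rw [Θ.apply_symm_apply]; rfl)

end IsAmalgam

section CyclicProd

variable {G : Type} [Group G] {k : ℕ}

/-- The product `g (j + n - 1) * ⋯ * g (j + 1) * g j` of `n` consecutive letters of the cyclic word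
`g`. It is written from right to left, so that its suffixes act first on a permutation
representation. -/
def cyclicProd (g : ZMod k → G) (j : ZMod k) : ℕ → G
  | 0 => 1
  | n + 1 => g (j + n) * cyclicProd g j n

theorem cyclicProd_add (g : ZMod k → G) (j : ZMod k) (m n : ℕ) :
    cyclicProd g j (m + n) = cyclicProd g (j + m) n * cyclicProd g j m := by
  induction n with
  | zero => rw [add_zero, cyclicProd, one_mul]
  | succ n ih =>
    rw [← add_assoc, cyclicProd, ih, cyclicProd, Nat.cast_add, add_assoc, mul_assoc]

theorem cyclicProd_mul (g : ZMod k → G) (j : ZMod k) (m : ℕ) :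
    cyclicProd g j (k * m) = cyclicProd g j k ^ m := by
  induction m with
  | zero => rw [mul_zero, cyclicProd, pow_zero]
  | succ m ih => simp [Nat.mul_succ, cyclicProd_add, ih, pow_succ']

theorem isConj_cyclicProd [NeZero k] (g : ZMod k → G) (j : ZMod k) :
    IsConj (cyclicProd g 0 k) (cyclicProd g j k) := by
  have h : cyclicProd g j k * cyclicProd g 0 j.val = cyclicProd g 0 j.val * cyclicProd g 0 k := by
    simpa [add_comm k, cyclicProd_add] using cyclicProd_add g 0 k j.val
  exact isConj_iff.mpr ⟨_, mul_inv_eq_of_eq_mul h.symm⟩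

theorem exists_cyclicProd_eq_prod {S : Type} (g : S → G) {L : List S} (hL : L ≠ []) :
    ∃ (k : ℕ) (_ : NeZero k) (u : ZMod k → S),
      (∀ j, u j ∈ L) ∧ cyclicProd (g ∘ u) 0 k = (L.map g).prod := by
  have hk : NeZero L.reverse.length := ⟨by simpa using hL⟩
  let u (j : ZMod L.reverse.length) : S := L.reverse[j.val]'(ZMod.val_lt j)
  have take (n : ℕ) (hn : n ≤ L.reverse.length) :
      cyclicProd (g ∘ u) 0 n = ((L.reverse.take n).reverse.map g).prod := by
    induction n with
    | zero => rfl
    | succ n ih =>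
      have hu : u n = L.reverse[n] := by simp only [u, ZMod.val_cast_of_lt hn]
      rw [cyclicProd, ih (Nat.le_of_succ_le hn), List.take_succ_eq_append_getElem hn, zero_add]
      simp only [Function.comp_apply, hu, List.reverse_append, List.reverse_singleton,
        List.singleton_append, List.map_cons, List.prod_cons]
  refine ⟨_, hk, u, fun j => List.mem_reverse.mp (List.getElem_mem _), ?_⟩
  rw [take _ le_rfl, List.take_length, List.reverse_reverse]

end CyclicProd

section Syllables

variable {F₁ F₂ H : Type} [Group F₁] [Group F₂] [Group H] {a : F₁} {b : F₂} {ι₁ : F₁ →* H}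
  {ι₂ : F₂ →* H} {k : ℕ}

variable (ι₁ ι₂) in
/-- The value in `H` of a pair of letters, one from each factor. Cyclic words alternating between
the factors are encoded as functions `ZMod k → F₁ × F₂`. -/
def syllable (s : F₁ × F₂) : H := ι₂ s.2 * ι₁ s.1

/-- The cyclic word representing the inverse of the element represented by `u`. The letters of the
two factors are shifted against each other so that the result again starts in `F₁`. -/
def reverseWord (u : ZMod k → F₁ × F₂) (i : ZMod k) : F₁ × F₂ := ((u (-i)).1⁻¹, (u (-i - 1)).2⁻¹)

theorem cyclicProd_reverseWord (u : ZMod k → F₁ × F₂) (n : ℕ) :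
    cyclicProd (syllable ι₁ ι₂ ∘ reverseWord u) 0 n =
      ι₁ (u (-n)).1 * (cyclicProd (syllable ι₁ ι₂ ∘ u) (-n) n)⁻¹ * (ι₁ (u 0).1)⁻¹ := by
  induction n with
  | zero => simp [cyclicProd]
  | succ n ih =>
    have shift_one : -((1 + n : ℕ) : ZMod k) + (1 : ℕ) = -n := by push_cast; ring
    have shift : -((1 + n : ℕ) : ZMod k) = -n - 1 := by push_cast; ring
    rw [cyclicProd, ih, add_comm n 1, cyclicProd_add, shift_one, shift]
    simp [cyclicProd, syllable, reverseWord, mul_assoc]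

theorem isConj_cyclicProd_reverseWord (u : ZMod k → F₁ × F₂) :
    IsConj (cyclicProd (syllable ι₁ ι₂ ∘ u) 0 k)⁻¹
      (cyclicProd (syllable ι₁ ι₂ ∘ reverseWord u) 0 k) := by
  rw [cyclicProd_reverseWord, CharP.cast_eq_zero, neg_zero]
  exact isConj_iff.mpr ⟨_, rfl⟩

theorem isConj_prod_append_comm (L L' : List H) : IsConj (L ++ L').prod (L' ++ L).prod := by
  rw [List.prod_append, List.prod_append]
  exact isConj_iff.mpr ⟨L.prod⁻¹, by group⟩

namespace IsAmalgam

theorem map_zpow_eq (A : IsAmalgam a b ι₁ ι₂) (c : ℤ) : ι₁ (a ^ c) = ι₂ (b ^ c) := by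
  rw [map_zpow, map_zpow, A.map_eq]

theorem exists_prod_syllable_eq (A : IsAmalgam a b ι₁ ι₂) (g : H) :
    ∃ L : List (F₁ × F₂), (L.map (syllable ι₁ ι₂)).prod = g := by
  have hg : g ∈ closure (Set.range ι₁ ∪ Set.range ι₂) := by
    rw [Subgroup.closure_union, ← MonoidHom.coe_range, ← MonoidHom.coe_range, closure_eq,
      closure_eq, A.range_sup_range]
    exact mem_top g
  refine closure_induction_left ⟨[], rfl⟩ ?_ ?_ hg
  all_goals
    rintro _ (⟨f, rfl⟩ | ⟨h, rfl⟩) _ - ⟨L, rfl⟩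
  · exact ⟨(f, 1) :: L, by simp [syllable]⟩
  · exact ⟨(1, h) :: L, by simp [syllable]⟩
  · exact ⟨(f⁻¹, 1) :: L, by simp [syllable]⟩
  · exact ⟨(1, h⁻¹) :: L, by simp [syllable]⟩

theorem isConj_prod_syllable_of_fst_mem (A : IsAmalgam a b ι₁ ι₂) {L : List (F₁ × F₂)}
    {s : F₁ × F₂} (hs : s ∈ L) (hsa : s.1 ∈ zpowers a) :
    (∃ h, IsConj (L.map (syllable ι₁ ι₂)).prod (ι₂ h)) ∨
    ∃ L' : List (F₁ × F₂), L'.length < L.length ∧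
      IsConj (L.map (syllable ι₁ ι₂)).prod (L'.map (syllable ι₁ ι₂)).prod := by
  obtain ⟨L₁, L₂, rfl⟩ := List.append_of_mem hs
  obtain ⟨c, hc⟩ := mem_zpowers_iff.mp hsa
  have hrot : IsConj ((L₁ ++ s :: L₂).map (syllable ι₁ ι₂)).prod
      (ι₂ (s.2 * b ^ c) * ((L₂ ++ L₁).map (syllable ι₁ ι₂)).prod) := by
    simpa [syllable, ← hc, A.map_zpow_eq, mul_assoc] using
      isConj_prod_append_comm (L₁.map (syllable ι₁ ι₂)) ((s :: L₂).map (syllable ι₁ ι₂))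
  rcases hL : L₂ ++ L₁ with _ | ⟨t, L⟩
  · exact .inl ⟨s.2 * b ^ c, by simpa [hL] using hrot⟩
  · refine .inr ⟨(t.1, s.2 * b ^ c * t.2) :: L, ?_, by simpa [hL, syllable, mul_assoc] using hrot⟩
    have := congrArg List.length hL
    simp only [List.length_append, List.length_cons] at this ⊢
    lia

theorem isConj_prod_syllable_of_snd_mem (A : IsAmalgam a b ι₁ ι₂) {L : List (F₁ × F₂)}
    {s : F₁ × F₂} (hs : s ∈ L) (hsb : s.2 ∈ zpowers b) :
    (∃ f, IsConj (L.map (syllable ι₁ ι₂)).prod (ι₁ f)) ∨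
    ∃ L' : List (F₁ × F₂), L'.length < L.length ∧
      IsConj (L.map (syllable ι₁ ι₂)).prod (L'.map (syllable ι₁ ι₂)).prod := by
  obtain ⟨L₁, L₂, rfl⟩ := List.append_of_mem hs
  obtain ⟨c, hc⟩ := mem_zpowers_iff.mp hsb
  have hrot : IsConj ((L₁ ++ s :: L₂).map (syllable ι₁ ι₂)).prod
      (((L₂ ++ L₁).map (syllable ι₁ ι₂)).prod * ι₁ (a ^ c * s.1)) := by
    simpa [syllable, ← hc, ← A.map_zpow_eq, mul_assoc] using
      isConj_prod_append_comm ((L₁ ++ [s]).map (syllable ι₁ ι₂)) (L₂.map (syllable ι₁ ι₂))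
  rcases List.eq_nil_or_concat (L₂ ++ L₁) with hL | ⟨L, t, hL⟩
  · exact .inl ⟨a ^ c * s.1, by simpa [hL] using hrot⟩
  · refine .inr ⟨L ++ [(t.1 * (a ^ c * s.1), t.2)], ?_,
      by simpa [hL, syllable, mul_assoc] using hrot⟩
    have := congrArg List.length hL
    simp only [List.length_append, List.length_cons, List.concat_eq_append] at this ⊢
    lia

theorem isConj_factor_or_cyclicProd (A : IsAmalgam a b ι₁ ι₂) (g : H) :
    (∃ f, IsConj g (ι₁ f)) ∨ (∃ h, IsConj g (ι₂ h)) ∨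
    ∃ (k : ℕ) (_ : NeZero k) (u : ZMod k → F₁ × F₂), (∀ j, (u j).1 ∉ zpowers a) ∧
      (∀ j, (u j).2 ∉ zpowers b) ∧ IsConj g (cyclicProd (syllable ι₁ ι₂ ∘ u) 0 k) := by
  obtain ⟨L, rfl⟩ := A.exists_prod_syllable_eq g
  induction hn : L.length using Nat.strong_induction_on generalizing L with | _ n ih
  subst hn
  have of_shorter {L' : List (F₁ × F₂)} (hL' : L'.length < L.length)
      (hc : IsConj (L.map (syllable ι₁ ι₂)).prod (L'.map (syllable ι₁ ι₂)).prod) :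
      (∃ f, IsConj (L.map (syllable ι₁ ι₂)).prod (ι₁ f)) ∨
      (∃ h, IsConj (L.map (syllable ι₁ ι₂)).prod (ι₂ h)) ∨
      ∃ (k : ℕ) (_ : NeZero k) (u : ZMod k → F₁ × F₂), (∀ j, (u j).1 ∉ zpowers a) ∧
        (∀ j, (u j).2 ∉ zpowers b) ∧
        IsConj (L.map (syllable ι₁ ι₂)).prod (cyclicProd (syllable ι₁ ι₂ ∘ u) 0 k) := by
    rcases ih _ hL' L' rfl with ⟨f, hf⟩ | ⟨h, hh⟩ | ⟨k, hk, u, hu₁, hu₂, hu⟩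
    exacts [.inl ⟨f, hc.trans hf⟩, .inr (.inl ⟨h, hc.trans hh⟩),
      .inr (.inr ⟨k, hk, u, hu₁, hu₂, hc.trans hu⟩)]
  by_cases h₁ : ∃ s ∈ L, s.1 ∈ zpowers a
  · obtain ⟨s, hs, hsa⟩ := h₁
    rcases A.isConj_prod_syllable_of_fst_mem hs hsa with hh | ⟨L', hL', hc⟩
    exacts [.inr (.inl hh), of_shorter hL' hc]
  by_cases h₂ : ∃ s ∈ L, s.2 ∈ zpowers b
  · obtain ⟨s, hs, hsb⟩ := h₂
    rcases A.isConj_prod_syllable_of_snd_mem hs hsb with hf | ⟨L', hL', hc⟩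
    exacts [.inl hf, of_shorter hL' hc]
  rcases eq_or_ne L [] with rfl | hL
  · exact .inl ⟨1, by simp⟩
  obtain ⟨k, hk, u, hu, hprod⟩ := exists_cyclicProd_eq_prod (syllable ι₁ ι₂) hL
  push Not at h₁ h₂
  exact .inr (.inr ⟨k, hk, u, fun j => h₁ _ (hu j), fun j => h₂ _ (hu j), by rw [hprod]⟩)

end IsAmalgam
end Syllables

section DoubleCosets

/-- `ψ` separates the double cosets of `⟨a⟩` represented in `S`: it keeps the elements of `S` away
from `⟨a⟩`, and it detects the equations `f' = a ^ x * f * a ^ y` with `f, f' ∈ S`. The exponents of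
such an equation are uniquely determined and so small that they are known once they are known
modulo `M`. -/
structure SeparatesDoubleCosets {F Γ : Type} [Group F] [Group Γ] (a : F) (S : Set F) (M : ℕ)
    (ψ : F →* Γ) : Prop where
  map_ne : ∀ f ∈ S, ∀ x : ℤ, ψ f ≠ ψ (a ^ x)
  exists_modEq : ∀ f ∈ S, ∀ f' ∈ S, ∀ x y : ℤ, ψ f' = ψ (a ^ x * f * a ^ y) →
    ∃ x' y' : ℤ, x' ≡ x [ZMOD M] ∧ y' ≡ y [ZMOD M] ∧ 2 * |x'| < M ∧ 2 * |y'| < M ∧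
      f' = a ^ x' * f * a ^ y'
  inj : ∀ f ∈ S, ∀ x y x' y' : ℤ, a ^ x * f * a ^ y = a ^ x' * f * a ^ y' → x = x' ∧ y = y'

variable {α β : Type} {a : FreeGroup α} {b : FreeGroup β}

theorem NotProperPower.exists_exponent_bound (hp : NotProperPower a) (ha : a ≠ 1)
    {S : Set (FreeGroup α)} (hfin : S.Finite) (hS : ∀ f ∈ S, f ∉ zpowers a) :
    ∃ B : ℕ, ∀ f ∈ S, ∀ f' ∈ S, ∀ x y : ℤ, f' = a ^ x * f * a ^ y →
      2 * |x| < B ∧ 2 * |y| < B := by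
  let E := ⋃ f ∈ S, ⋃ f' ∈ S, {p : ℤ × ℤ | f' = a ^ p.1 * f * a ^ p.2}
  have hE : E.Finite := hfin.biUnion fun f hf => hfin.biUnion fun f' _ =>
    Set.Subsingleton.finite fun p hp' p' hp'' =>
      Prod.ext_iff.mpr ((hp.freePair ha (hS f hf)).zpow_mul_zpow_inj (hp'.symm.trans hp''))
  obtain ⟨B, hB⟩ := (hE.image fun p => 2 * p.1.natAbs + 2 * p.2.natAbs).bddAbove
  refine ⟨B + 1, fun f hf f' hf' x y h => ?_⟩
  have := hB (Set.mem_image_of_mem _ (show (x, y) ∈ E from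
    Set.mem_biUnion hf (Set.mem_biUnion hf' h)))
  dsimp only at this
  simp only [Int.abs_eq_natAbs]
  lia

theorem NotProperPower.exists_separatesDoubleCosets (hp : NotProperPower a) (ha : a ≠ 1)
    {S : Set (FreeGroup α)} (hfin : S.Finite) (hS : ∀ f ∈ S, f ∉ zpowers a) :
    ∃ B : ℕ, ∀ M > B, ∃ (Γ : Type) (_ : Group Γ) (_ : Finite Γ) (ψ : FreeGroup α →* Γ),
      SeparatesDoubleCosets a S M ψ := by
  obtain ⟨B, hB⟩ := hp.exists_exponent_bound ha hfin hS
  refine ⟨B, fun M hM => ?_⟩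
  obtain ⟨Γ, _, _, ψ, hne, hmod⟩ := hp.exists_finite_separating ha hfin hS (Nat.zero_lt_of_lt hM)
  refine ⟨Γ, _, ‹_›, ψ, hne, fun f hf f' hf' x y h => ?_,
    fun f hf x y x' y' h => (hp.freePair ha (hS f hf)).zpow_mul_zpow_inj h⟩
  obtain ⟨x', y', hx, hy, hxy⟩ := hmod f hf f' hf' x y h
  obtain ⟨hx', hy'⟩ := hB f hf f' hf' x' y' hxy
  exact ⟨x', y', hx, hy, by lia, by lia, hxy⟩

theorem SeparatesDoubleCosets.prod {F Γ Δ : Type} [Group F] [Group Γ] [Group Δ] {a : F} {S : Set F}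
    {M : ℕ} {ψ : F →* Γ} (D : SeparatesDoubleCosets a S M ψ) (χ : F →* Δ) :
    SeparatesDoubleCosets a S M (ψ.prod χ) where
  map_ne f hf x h := D.map_ne f hf x (congrArg Prod.fst h)
  exists_modEq f hf f' hf' x y h := D.exists_modEq f hf f' hf' x y (congrArg Prod.fst h)
  inj := D.inj

theorem exists_separatesDoubleCosets_orderOf_eq (ha : a ≠ 1) (hpa : NotProperPower a) (hb : b ≠ 1)
    (hpb : NotProperPower b) {S : Set (FreeGroup α)} (hS : S.Finite) (hSa : ∀ f ∈ S, f ∉ zpowers a)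
    {T : Set (FreeGroup β)} (hT : T.Finite) (hTb : ∀ f ∈ T, f ∉ zpowers b) :
    ∃ (M : ℕ) (Γ₁ Γ₂ : Type) (_ : Group Γ₁) (_ : Group Γ₂) (_ : Finite Γ₁) (_ : Finite Γ₂)
      (ψ₁ : FreeGroup α →* Γ₁) (ψ₂ : FreeGroup β →* Γ₂), orderOf (ψ₁ a) = orderOf (ψ₂ b) ∧
      SeparatesDoubleCosets a S M ψ₁ ∧ SeparatesDoubleCosets b T M ψ₂ := by
  obtain ⟨B₁, h₁⟩ := hpa.exists_separatesDoubleCosets ha hS hSa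
  obtain ⟨B₂, h₂⟩ := hpb.exists_separatesDoubleCosets hb hT hTb
  obtain ⟨Γ₁, _, _, ψ₁, D₁⟩ := h₁ (B₁ + B₂ + 1) (by lia)
  obtain ⟨Γ₂, _, _, ψ₂, D₂⟩ := h₂ (B₁ + B₂ + 1) (by lia)
  have hn : 0 < orderOf (ψ₁ a) * orderOf (ψ₂ b) := mul_pos (orderOf_pos _) (orderOf_pos _)
  obtain ⟨Δ₁, _, _, χ₁, hχ₁⟩ := exists_finite_orderOf_eq ha hn
  obtain ⟨Δ₂, _, _, χ₂, hχ₂⟩ := exists_finite_orderOf_eq hb hn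
  refine ⟨_, Γ₁ × Δ₁, Γ₂ × Δ₂, inferInstance, inferInstance, inferInstance, inferInstance,
    ψ₁.prod χ₁, ψ₂.prod χ₂, ?_, D₁.prod χ₁, D₂.prod χ₂⟩
  rw [MonoidHom.prod_apply, MonoidHom.prod_apply, Prod.orderOf, Prod.orderOf, hχ₁, hχ₂,
    Nat.lcm_eq_right (dvd_mul_right _ _), Nat.lcm_eq_right (dvd_mul_left _ _)]

end DoubleCosets

section FreelyIndexed

variable {F Γ X ι : Type} [Group F] [Group Γ] {σ : F →* Equiv.Perm X} {ψ : F →* Γ} {P Q : ι → X}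

/-- The points `P i` lie in distinct orbits of the action `σ`, and their stabilizers lie in the
kernel of `ψ`. -/
def FreelyIndexed (σ : F →* Equiv.Perm X) (ψ : F →* Γ) (P : ι → X) : Prop :=
  ∀ g i j, σ g (P j) = P i → i = j ∧ ψ g = 1

namespace FreelyIndexed

theorem comp (hP : FreelyIndexed σ ψ P) {κ : Type} {r : κ → ι} (hr : Function.Injective r) :
    FreelyIndexed σ ψ (P ∘ r) :=
  fun g i j h => (hP g _ _ h).imp_left (@hr i j)

theorem eq_of_apply_eq (hP : FreelyIndexed σ ψ P) {g g' : F} {i j : ι}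
    (h : σ g (P j) = σ g' (P i)) : i = j ∧ ψ g = ψ g' := by
  have := hP (g'⁻¹ * g) i j (by simp [h])
  rwa [map_mul, map_inv, inv_mul_eq_one, eq_comm (a := ψ g')] at this

theorem map (hP : FreelyIndexed σ ψ P) {f : ι → F} (hPQ : ∀ j, σ (f j) (P j) = Q j) :
    FreelyIndexed σ ψ Q := by
  intro g i j h
  rw [← hPQ, ← hPQ, ← Equiv.Perm.mul_apply, ← map_mul] at h
  obtain ⟨rfl, h⟩ := hP.eq_of_apply_eq h
  exact ⟨rfl, by simpa using h⟩

theorem exists_zpow_apply_eq (hP : FreelyIndexed σ ψ P) {f : ι → F}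
    (hPQ : ∀ j, σ (f j) (P j) = Q j) {a g : F} (hg : ∀ x : ℤ, ψ g ≠ ψ (a ^ x)) {c : ℤ} {m : ι}
    (h : ∃ i, (σ a).SameCycle (P i) (σ (g * a ^ c) (P m)) ∨
      (σ a).SameCycle (Q i) (σ (g * a ^ c) (P m))) :
    ∃ d : ℤ, σ (g * a ^ c) (P m) = σ (a ^ d) (Q m) := by
  obtain ⟨i, ⟨d, hd⟩ | ⟨d, hd⟩⟩ := h
  · rw [← map_zpow, eq_comm] at hd
    refine absurd (hP.eq_of_apply_eq hd).2 fun h => hg (d - c) ?_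
    rw [zpow_sub, map_mul, map_inv, ← h, map_mul, mul_inv_cancel_right]
  · rw [← map_zpow, eq_comm] at hd
    have hd' : σ (g * a ^ c) (P m) = σ (a ^ d * f i) (P i) := by
      rw [hd, map_mul, Equiv.Perm.mul_apply, hPQ]
    obtain ⟨rfl, -⟩ := hP.eq_of_apply_eq hd'
    exact ⟨d, hd⟩

theorem map_eq_of_zpow_apply_eq (hP : FreelyIndexed σ ψ P) {f : ι → F}
    (hPQ : ∀ j, σ (f j) (P j) = Q j) {a g : F} {c d : ℤ} {m : ι}
    (h : σ (g * a ^ c) (P m) = σ (a ^ d) (Q m)) : ψ g = ψ (a ^ d * f m * a ^ (-c)) := by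
  rw [← hPQ, ← Equiv.Perm.mul_apply, ← map_mul] at h
  rw [map_mul, ← (hP.eq_of_apply_eq h).2, map_mul ψ g, zpow_neg, map_inv, mul_inv_cancel_right]

end FreelyIndexed

end FreelyIndexed

section Circuits

variable {F₁ F₂ H : Type} [Group F₁] [Group F₂] [Group H] {a : F₁} {b : F₂} {ι₁ : F₁ →* H}
  {ι₂ : F₂ →* H} {k l : ℕ} {X : Type} {Φ : H →* Equiv.Perm X} {u : ZMod k → F₁ × F₂}
  {v : ZMod l → F₁ × F₂} {x : X}

variable (ι₁ ι₂ Φ u x) in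
/-- The position reached from `x` after reading `n` syllables of the cyclic word `u`. -/
def fullPoint (n : ℕ) : X := Φ (cyclicProd (syllable ι₁ ι₂ ∘ u) 0 n) x

variable (ι₁ ι₂ Φ u x) in
/-- The position reached from `x` after reading `n` syllables of the cyclic word `u` and the letter
from `F₁` of the next one. -/
def halfPoint (n : ℕ) : X := Φ (ι₁ (u n).1) (fullPoint ι₁ ι₂ Φ u x n)

variable (ι₁ ι₂ Φ u x) in
/-- The set of all positions visited when the cyclic word `u` is read again and again from `x`. -/
def trace : Set X := Set.range (fullPoint ι₁ ι₂ Φ u x) ∪ Set.range (halfPoint ι₁ ι₂ Φ u x)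

/-- The union of the cycles of `t` that meet `S`. -/
def cycleHull (t : Equiv.Perm X) (S : Set X) : Set X := {y | ∃ z ∈ S, t.SameCycle z y}

theorem fullPoint_zero : fullPoint ι₁ ι₂ Φ u x 0 = x := by
  rw [fullPoint, cyclicProd, map_one, Equiv.Perm.one_apply]

theorem fullPoint_succ (n : ℕ) :
    fullPoint ι₁ ι₂ Φ u x (n + 1) = Φ (ι₂ (u n).2) (halfPoint ι₁ ι₂ Φ u x n) := by
  simp only [fullPoint, halfPoint, cyclicProd, zero_add, Function.comp_apply, syllable, map_mul,
    Equiv.Perm.mul_apply]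

variable {Γ₁ Γ₂ : Type} [Group Γ₁] [Group Γ₂] {ψ₁ : F₁ →* Γ₁} {ψ₂ : F₂ →* Γ₂} {p q : ZMod k → X}

variable (ι₁ ι₂ Φ ψ₁ ψ₂ u p q) in
/-- The cyclic word `u` closes up to a circuit through the points `p 0, q 0, p 1, q 1, …` of a
permutation representation of the amalgam, and away from the circuit itself the two factors act on
these points as freely as `ψ₁` and `ψ₂` can see. -/
structure Circuit : Prop where
  map_fst : ∀ j, Φ (ι₁ (u j).1) (p j) = q j
  map_snd : ∀ j, Φ (ι₂ (u j).2) (q j) = p (j + 1)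
  free_fst : FreelyIndexed (Φ.comp ι₁) ψ₁ p
  free_snd : FreelyIndexed (Φ.comp ι₂) ψ₂ q

theorem eq_of_zpow_mul_sumElim_eq {Γ Δ Z : Type} [Group Γ] {g : Γ} {w w' : Z → Γ} {c : Δ}
    {r r' : Z → Z} (hr : Function.Injective r) (hr' : Function.Injective r')
    (hw : ∀ i j, ∀ x : ℤ, g ^ x * w i ≠ w' j) {U : Z ⊕ Z → Γ × Δ × Z}
    (hU : U = Sum.elim (fun j => (w j, c, r j)) fun j => (w' j, c, r' j)) (i j : Z ⊕ Z) (x : ℤ)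
    (h : (g ^ x * (U j).1, (U j).2) = U i) : i = j := by
  subst hU
  rcases i with i | i <;> rcases j with j | j <;>
    simp only [Sum.elim_inl, Sum.elim_inr, Prod.mk.injEq] at h
  · rw [hr h.2.2]
  · exact absurd (by rw [← h.1, zpow_neg, inv_mul_cancel_left]) (hw i j (-x))
  · exact absurd h.1 (hw j i x)
  · rw [hr' h.2.2]

theorem IsAmalgam.exists_circuit (A : IsAmalgam a b ι₁ ι₂) [Finite Γ₁] [Finite Γ₂] [NeZero k]
    (hord : orderOf (ψ₁ a) = orderOf (ψ₂ b)) (hu₁ : ∀ j, ∀ x : ℤ, ψ₁ (u j).1 ≠ ψ₁ (a ^ x))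
    (hu₂ : ∀ j, ∀ x : ℤ, ψ₂ (u j).2 ≠ ψ₂ (b ^ x)) :
    ∃ (X : Type) (_ : Finite X) (Φ : H →* Equiv.Perm X) (p q : ZMod k → X),
      Circuit ι₁ ι₂ Φ u ψ₁ ψ₂ p q := by
  simp only [map_zpow] at hu₁ hu₂
  obtain ⟨Θ, Φ, hΘ, h₁, h₂⟩ := A.exists_perm_rep (Z := ZMod k) (ι := ZMod k ⊕ ZMod k) hord
    (U := Sum.elim (fun j => (ψ₁ (u j).1, 1, j)) fun j => (1, 1, j + 1))
    (V := Sum.elim (fun j => (1, 1, j)) fun j => (ψ₂ (u j).2, 1, j))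
    (eq_of_zpow_mul_sumElim_eq Function.injective_id (add_left_injective 1)
      (fun i _ x h => hu₁ i (-x) (by rw [zpow_neg, eq_inv_of_mul_eq_one_right h])) rfl)
    (eq_of_zpow_mul_sumElim_eq Function.injective_id Function.injective_id
      (fun _ j x h => hu₂ j x (by rw [← h, mul_one])) rfl)
  have hp (j) : Θ (ψ₁ (u j).1, 1, j) = (1, 1, j) := hΘ (.inl j)
  have hq (j) : Θ (1, 1, j + 1) = (ψ₂ (u j).2, 1, j) := hΘ (.inr j)
  refine ⟨_, inferInstance, Φ, fun j => (1, 1, j), fun j => (ψ₁ (u j).1, 1, j), fun j => ?_,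
    fun j => Θ.injective ?_, fun g i j h => ?_, fun g i j h => ?_⟩
  · rw [h₁, mul_one]
  · rw [h₂, hp, hq, mul_one]
  · simpa [h₁, and_comm, eq_comm] using h
  · have := congrArg Θ h
    rw [MonoidHom.comp_apply, h₂, hp, hp] at this
    simpa [and_comm, eq_comm] using this

namespace Circuit

theorem reverse (C : Circuit ι₁ ι₂ Φ u ψ₁ ψ₂ p q) :
    Circuit ι₁ ι₂ Φ (reverseWord u) ψ₁ ψ₂ (fun i => q (-i)) fun i => p (-i) where
  map_fst j := by simp [reverseWord, ← C.map_fst]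
  map_snd j := by
    have := C.map_snd (-j - 1)
    rw [sub_add_cancel] at this
    simp [reverseWord, ← this, sub_eq_add_neg, add_comm]
  free_fst := (C.free_fst.map C.map_fst).comp neg_injective
  free_snd := by
    have := (C.free_snd.map C.map_snd).comp ((sub_left_injective (b := 1)).comp neg_injective)
    simpa only [Function.comp_def, sub_add_cancel] using this

/- On the hull of the circuit, a word `v` whose letters stay away from `⟨a⟩` and `⟨b⟩` cannot help
following the circuit. -/
theorem exists_points_eq (A : IsAmalgam a b ι₁ ι₂) (C : Circuit ι₁ ι₂ Φ u ψ₁ ψ₂ p q)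
    (hv₁ : ∀ i, ∀ x : ℤ, ψ₁ (v i).1 ≠ ψ₁ (a ^ x)) (hv₂ : ∀ i, ∀ x : ℤ, ψ₂ (v i).2 ≠ ψ₂ (b ^ x))
    (hx : trace ι₁ ι₂ Φ v x ⊆ cycleHull (Φ (ι₁ a)) (Set.range p ∪ Set.range q)) {j : ZMod k}
    (hj : (Φ (ι₁ a)).SameCycle (p j) x) :
    ∃ c d : ℕ → ℤ, ∀ n : ℕ, fullPoint ι₁ ι₂ Φ v x n = Φ (ι₁ (a ^ c n)) (p (j + n)) ∧
      halfPoint ι₁ ι₂ Φ v x n = Φ (ι₁ (a ^ d n)) (q (j + n)) := by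
  have hull {y} (hy : y ∈ trace ι₁ ι₂ Φ v x) :
      ∃ i, (Φ (ι₁ a)).SameCycle (p i) y ∨ (Φ (ι₁ a)).SameCycle (q i) y := by
    obtain ⟨_, ⟨i, rfl⟩ | ⟨i, rfl⟩, h⟩ := hx hy
    exacts [⟨i, .inl h⟩, ⟨i, .inr h⟩]
  have half (n : ℕ) (c : ℤ) (h : fullPoint ι₁ ι₂ Φ v x n = Φ (ι₁ (a ^ c)) (p (j + n))) :
      ∃ d : ℤ, halfPoint ι₁ ι₂ Φ v x n = Φ (ι₁ (a ^ d)) (q (j + n)) := by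
    have hn : halfPoint ι₁ ι₂ Φ v x n = Φ.comp ι₁ ((v n).1 * a ^ c) (p (j + n)) := by
      rw [halfPoint, h, map_mul, Equiv.Perm.mul_apply]
      rfl
    have := C.free_fst.exists_zpow_apply_eq C.map_fst (hv₁ n)
      (hn ▸ hull (.inr (Set.mem_range_self n)))
    rwa [← hn] at this
  have full (n : ℕ) : ∃ c : ℤ, fullPoint ι₁ ι₂ Φ v x n = Φ (ι₁ (a ^ c)) (p (j + n)) := by
    induction n with
    | zero => simpa [Equiv.Perm.SameCycle, fullPoint_zero, eq_comm] using hj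
    | succ n ih =>
      obtain ⟨c, hc⟩ := ih
      obtain ⟨d, hd⟩ := half n c hc
      have hn : fullPoint ι₁ ι₂ Φ v x (n + 1) = Φ.comp ι₂ ((v n).2 * b ^ d) (q (j + n)) := by
        rw [fullPoint_succ, hd, A.map_zpow_eq, map_mul, Equiv.Perm.mul_apply]
        rfl
      obtain ⟨i, hi⟩ := hull (.inl (Set.mem_range_self (n + 1)))
      have := C.free_snd.exists_zpow_apply_eq C.map_snd (hv₂ n) (c := d) (m := j + n)
        (by
          rw [← hn]
          rcases hi with hi | hi
          · exact ⟨i - 1, .inr (by simpa [← A.map_eq] using hi)⟩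
          · exact ⟨i, .inl (by simpa [← A.map_eq] using hi)⟩)
      rw [← hn] at this
      simpa [A.map_zpow_eq, add_assoc] using this
  choose c hc using full
  choose d hd using fun n => half n (c n) (hc n)
  exact ⟨c, d, fun n => ⟨hc n, hd n⟩⟩

theorem exists_exponents (A : IsAmalgam a b ι₁ ι₂) (C : Circuit ι₁ ι₂ Φ u ψ₁ ψ₂ p q)
    (hv₁ : ∀ i, ∀ x : ℤ, ψ₁ (v i).1 ≠ ψ₁ (a ^ x)) (hv₂ : ∀ i, ∀ x : ℤ, ψ₂ (v i).2 ≠ ψ₂ (b ^ x))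
    (hx : trace ι₁ ι₂ Φ v x ⊆ cycleHull (Φ (ι₁ a)) (Set.range p ∪ Set.range q)) {j : ZMod k}
    (hj : (Φ (ι₁ a)).SameCycle (p j) x) :
    ∃ c d : ℕ → ℤ, ∀ n : ℕ, ψ₁ (v n).1 = ψ₁ (a ^ d n * (u (j + n)).1 * a ^ (-c n)) ∧
      ψ₂ (v n).2 = ψ₂ (b ^ c (n + 1) * (u (j + n)).2 * b ^ (-d n)) := by
  obtain ⟨c, d, h⟩ := exists_points_eq A C hv₁ hv₂ hx hj
  refine ⟨c, d, fun n => ⟨C.free_fst.map_eq_of_zpow_apply_eq C.map_fst ?_,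
    C.free_snd.map_eq_of_zpow_apply_eq C.map_snd ?_⟩⟩
  · rw [map_mul, Equiv.Perm.mul_apply]
    exact ((congrArg (Φ (ι₁ (v n).1)) (h n).1).symm.trans (h n).2)
  · rw [map_mul, Equiv.Perm.mul_apply]
    have := fullPoint_succ (ι₁ := ι₁) (ι₂ := ι₂) (Φ := Φ) (u := v) (x := x) n
    rw [(h (n + 1)).1, (h n).2, A.map_zpow_eq, A.map_zpow_eq, Nat.cast_succ, ← add_assoc] at this
    exact this.symm

end Circuit

theorem eq_of_modEq_of_two_mul_abs_lt {M x y : ℤ} (h : x ≡ y [ZMOD M]) (hx : 2 * |x| < M)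
    (hy : 2 * |y| < M) : x = y :=
  (sub_eq_zero.mp (Int.eq_zero_of_abs_lt_dvd h.dvd
    (by have := abs_sub y x; linarith))).symm

theorem SeparatesDoubleCosets.exists_eq_conj {M : ℕ} {S : Set F₁} {T : Set F₂}
    (D₁ : SeparatesDoubleCosets a S M ψ₁) (D₂ : SeparatesDoubleCosets b T M ψ₂)
    {s s' : ℕ → F₁ × F₂} (hs : ∀ n, s n ∈ S ×ˢ T) (hs' : ∀ n, s' n ∈ S ×ˢ T) {c d : ℕ → ℤ}
    (h : ∀ n, ψ₁ (s' n).1 = ψ₁ (a ^ d n * (s n).1 * a ^ (-c n)) ∧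
      ψ₂ (s' n).2 = ψ₂ (b ^ c (n + 1) * (s n).2 * b ^ (-d n))) :
    ∃ c d : ℕ → ℤ, ∀ n, (s' n).1 = a ^ d n * (s n).1 * a ^ (-c n) ∧
      (s' n).2 = b ^ c (n + 1) * (s n).2 * b ^ (-d n) := by
  choose ξ η hξ hη hξM hηM h₁ using fun n =>
    D₁.exists_modEq _ (hs n).1 _ (hs' n).1 _ _ (h n).1
  choose ζ θ hζ hθ hζM hθM h₂ using fun n =>
    D₂.exists_modEq _ (hs n).2 _ (hs' n).2 _ _ (h n).2
  have hθξ (n) : θ n = -ξ n := eq_of_modEq_of_two_mul_abs_lt ((hθ n).trans (hξ n).neg.symm)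
    (hθM n) (by rw [abs_neg]; exact hξM n)
  have hζη (n) : ζ n = -η (n + 1) := eq_of_modEq_of_two_mul_abs_lt
    ((hζ n).trans (by simpa using (hη (n + 1)).neg.symm)) (hζM n) (by rw [abs_neg]; exact hηM _)
  refine ⟨fun n => -η n, ξ, fun n => ⟨?_, ?_⟩⟩
  · rw [neg_neg, ← h₁]
  · beta_reduce
    rw [← hζη, ← hθξ, ← h₂]

theorem IsAmalgam.cyclicProd_eq_conj (A : IsAmalgam a b ι₁ ι₂) {j : ZMod k} {c d : ℕ → ℤ}
    (h : ∀ n : ℕ, (v n).1 = a ^ d n * (u (j + n)).1 * a ^ (-c n) ∧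
      (v n).2 = b ^ c (n + 1) * (u (j + n)).2 * b ^ (-d n)) (n : ℕ) :
    cyclicProd (syllable ι₁ ι₂ ∘ v) 0 n =
      ι₁ (a ^ c n) * cyclicProd (syllable ι₁ ι₂ ∘ u) j n * (ι₁ (a ^ c 0))⁻¹ := by
  induction n with
  | zero => simp [cyclicProd]
  | succ n ih =>
    rw [cyclicProd, ih, cyclicProd, zero_add]
    simp only [Function.comp_apply, syllable, (h n).1, (h n).2, map_mul, ← A.map_zpow_eq, zpow_neg,
      map_inv]
    group

/-- `u` is to `k` as `v` is to `l`: any two powers `u ^ r` and `v ^ s` with `k * r = l * s` are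
conjugate. For cyclic words of lengths `k` and `l`, these are the powers of equal length. -/
def ConjPow {G : Type} [Group G] (k l : ℕ) (u v : G) : Prop :=
  ∀ r s, k * r = l * s → IsConj (u ^ r) (v ^ s)

theorem ConjPow.of_isConj {G : Type} [Group G] {u u' v v' : G} (h : ConjPow k l u' v')
    (hu : IsConj u u') (hv : IsConj v v') : ConjPow k l u v := fun r s hrs =>
  ((hu.pow r).trans (h r s hrs)).trans (hv.pow s).symm

theorem Circuit.conjPow_of_sameCycle [NeZero k] (A : IsAmalgam a b ι₁ ι₂)
    (C : Circuit ι₁ ι₂ Φ u ψ₁ ψ₂ p q) {M : ℕ} {S : Set F₁} {T : Set F₂}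
    (D₁ : SeparatesDoubleCosets a S M ψ₁) (D₂ : SeparatesDoubleCosets b T M ψ₂)
    (hu : ∀ j, u j ∈ S ×ˢ T) (hv : ∀ j, v j ∈ S ×ˢ T)
    (hx : trace ι₁ ι₂ Φ v x ⊆ cycleHull (Φ (ι₁ a)) (Set.range p ∪ Set.range q)) {j : ZMod k}
    (hj : (Φ (ι₁ a)).SameCycle (p j) x) :
    ConjPow k l (cyclicProd (syllable ι₁ ι₂ ∘ u) 0 k) (cyclicProd (syllable ι₁ ι₂ ∘ v) 0 l) := by
  intro r s hrs
  obtain ⟨c, d, h⟩ := C.exists_exponents A (fun i => D₁.map_ne _ (hv i).1)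
    (fun i => D₂.map_ne _ (hv i).2) hx hj
  obtain ⟨c, d, h⟩ := D₁.exists_eq_conj D₂ (fun n => hu _) (fun n => hv _) h
  have hk : ((k * r : ℕ) : ZMod k) = 0 := by simp
  have hl : ((k * r : ℕ) : ZMod l) = 0 := by simp [hrs]
  have hc : c (k * r) = c 0 := by
    have h₀ := (h 0).1
    have h₁ := (h (k * r)).1
    rw [hk, hl] at h₁
    rw [Nat.cast_zero, Nat.cast_zero, h₁] at h₀
    exact neg_injective (D₁.inj _ (hu _).1 _ _ _ _ h₀).2
  refine ((isConj_cyclicProd _ j).pow r).trans (isConj_iff.mpr ⟨ι₁ (a ^ c 0), ?_⟩)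
  rw [← cyclicProd_mul, ← cyclicProd_mul, ← hrs, A.cyclicProd_eq_conj h, hc]

theorem Circuit.conjPow_or_conjPow_inv [NeZero k] (A : IsAmalgam a b ι₁ ι₂)
    (C : Circuit ι₁ ι₂ Φ u ψ₁ ψ₂ p q) {M : ℕ} {S : Set F₁} {T : Set F₂}
    (D₁ : SeparatesDoubleCosets a S M ψ₁) (D₂ : SeparatesDoubleCosets b T M ψ₂)
    (hu : ∀ j, u j ∈ S ×ˢ T) (hu' : ∀ j, reverseWord u j ∈ S ×ˢ T) (hv : ∀ j, v j ∈ S ×ˢ T)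
    (hx : trace ι₁ ι₂ Φ v x ⊆ cycleHull (Φ (ι₁ a)) (Set.range p ∪ Set.range q)) :
    ConjPow k l (cyclicProd (syllable ι₁ ι₂ ∘ u) 0 k) (cyclicProd (syllable ι₁ ι₂ ∘ v) 0 l) ∨
      ConjPow k l (cyclicProd (syllable ι₁ ι₂ ∘ u) 0 k)⁻¹
        (cyclicProd (syllable ι₁ ι₂ ∘ v) 0 l) := by
  obtain ⟨_, ⟨j, rfl⟩ | ⟨j, rfl⟩, hj⟩ := hx (.inl ⟨0, fullPoint_zero⟩)
  · exact .inl (C.conjPow_of_sameCycle A D₁ D₂ hu hv hx hj)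
  · have hj' : (Φ (ι₁ a)).SameCycle (q (- -j)) x := by rwa [neg_neg]
    refine .inr (.of_isConj (C.reverse.conjPow_of_sameCycle A D₁ D₂ hu' hv ?_ hj')
      (isConj_cyclicProd_reverseWord u) (.refl _))
    rwa [← Function.comp_def q, ← Function.comp_def p, neg_surjective.range_comp,
      neg_surjective.range_comp, Set.union_comm]

end Circuits

section SkewPermutations

variable {X R : Type} [AddCommGroup R]

theorem skew_pow_apply {T : Equiv.Perm (X × R)} {f : X → X} {g : X → R}
    (hT : ∀ x τ, T (x, τ) = (f x, τ + g x)) (n : ℕ) (x : X) (τ : R) :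
    (T ^ n) (x, τ) = (f^[n] x, τ + ∑ t ∈ Finset.range n, g (f^[t] x)) := by
  induction n with
  | zero =>
    rw [pow_zero, Equiv.Perm.one_apply, Finset.sum_range_zero, add_zero,
      Function.iterate_zero_apply]
  | succ n ih =>
    rw [pow_succ', Equiv.Perm.mul_apply, ih, hT, Finset.sum_range_succ,
      Function.iterate_succ_apply', add_assoc]

theorem dvd_orderOf_of_apply_eq {N : ℕ} {T : Equiv.Perm (X × ZMod N)} {x : X} {r : ZMod N}
    (hr : IsUnit r) (hT : ∀ τ, T (x, τ) = (x, τ + r)) : N ∣ orderOf T := by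
  have hpow (n : ℕ) : (T ^ n) (x, 0) = (x, n * r) := by
    induction n with
    | zero => simp
    | succ n ih => rw [pow_succ', Equiv.Perm.mul_apply, ih, hT, Nat.cast_succ, add_one_mul]
  have h := congrArg Prod.snd (hpow (orderOf T))
  rw [pow_orderOf_eq_one, Equiv.Perm.one_apply, eq_comm, hr.mul_left_eq_zero] at h
  exact (ZMod.natCast_eq_zero_iff _ _).mp h

theorem orderOf_eq_of_skew {T : Equiv.Perm X} {T' : Equiv.Perm (X × R)} {g : X → R}
    (hT : ∀ x τ, T' (x, τ) = (T x, τ + g x)) {p N : ℕ} (hp : ∀ r : R, p • r = 0)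
    (hN : T' ^ N = 1) (hNp : N.Coprime p) : orderOf T' = orderOf T := by
  have hpow (n : ℕ) (x : X) (τ : R) := skew_pow_apply hT n x τ
  simp only [Equiv.Perm.iterate_eq_pow] at hpow
  refine Nat.dvd_antisymm ?_ (orderOf_dvd_of_pow_eq_one (Equiv.ext fun x => ?_))
  · have h : orderOf T' ∣ orderOf T * p := by
      refine orderOf_dvd_of_pow_eq_one (Equiv.ext fun ⟨x, τ⟩ => ?_)
      have hT₁ (x : X) (τ : R) := hpow (orderOf T) x τ
      simp only [pow_orderOf_eq_one] at hT₁
      rw [pow_mul, skew_pow_apply (f := id) hT₁, Function.iterate_id]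
      simp [hp]
    exact (hNp.coprime_dvd_left (orderOf_dvd_of_pow_eq_one hN)).dvd_of_dvd_mul_right h
  · have h := hpow (orderOf T') x 0
    rw [pow_orderOf_eq_one] at h
    exact (congrArg Prod.fst h).symm

theorem sum_range_add_mul {q : ℕ} [Fact q.Prime] {d : ZMod q} (hd : d ≠ 0) (τ : ZMod q)
    (g : ZMod q → R) : ∑ t ∈ Finset.range q, g (τ + t * d) = ∑ y, g y := by
  have hinj : Set.InjOn (fun t : ℕ => τ + (t : ZMod q) * d) (Finset.range q) := by
    intro t ht t' ht' h
    have h := mul_right_cancel₀ hd (add_left_cancel h)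
    rw [Finset.coe_range, Set.mem_Iio] at ht ht'
    rwa [ZMod.natCast_eq_natCast_iff', Nat.mod_eq_of_lt ht, Nat.mod_eq_of_lt ht'] at h
  exact Finset.sum_nbij _ (fun _ _ => Finset.mem_univ _) hinj
    (Finset.surjOn_of_injOn_of_card_le _ (fun _ _ => Finset.mem_coe.mpr (Finset.mem_univ _)) hinj
      (by simp)) fun _ _ => rfl

theorem skew_skew_pow_eq_one {q : ℕ} [Fact q.Prime] {T : Equiv.Perm ((X × ZMod q) × R)}
    {d : X → ZMod q} {g : X × ZMod q → R} (hd : ∀ x, d x ≠ 0) (hg : ∀ x, ∑ τ, g (x, τ) = 0)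
    (hT : ∀ x τ σ, T ((x, τ), σ) = ((x, τ + d x), σ + g (x, τ))) : T ^ q = 1 := by
  have hiter (n : ℕ) (x : X) (τ : ZMod q) :
      (fun z : X × ZMod q => (z.1, z.2 + d z.1))^[n] (x, τ) = (x, τ + n * d x) := by
    induction n with
    | zero => simp
    | succ n ih =>
      simp only [Function.iterate_succ_apply', ih, Nat.cast_succ, add_one_mul, add_assoc]
  ext1 ⟨⟨x, τ⟩, σ⟩
  rw [skew_pow_apply (f := fun z => (z.1, z.2 + d z.1)) (fun _ _ => hT _ _ _)]
  simp only [hiter]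
  rw [sum_range_add_mul (hd x) τ fun y => g (x, y), hg]
  simp

end SkewPermutations

section Displacement

variable {F₁ F₂ H : Type} [Group F₁] [Group F₂] [Group H] {a : F₁} {b : F₂} {ι₁ : F₁ →* H}
  {ι₂ : F₂ →* H} {k : ℕ} {X R : Type} [AddCommGroup R] {Φ : H →* Equiv.Perm X} {lam : X → R}
  {u : ZMod k → F₁ × F₂} {x : X}

variable (ι₁ ι₂ Φ lam u x) in
/-- The total change of `lam` under the steps from `F₂` when `n` syllables of the cyclic word `u`
are read from `x`. -/
def displacement (n : ℕ) : R :=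
  ∑ i ∈ Finset.range n, lam (fullPoint ι₁ ι₂ Φ u x (i + 1)) -
    ∑ i ∈ Finset.range n, lam (halfPoint ι₁ ι₂ Φ u x i)

variable (ι₁ ι₂ Φ lam) in
/-- The extension of the permutation representation `Φ` of the amalgam to `X × R` in which `F₁` acts
trivially on the fibres, while `F₂` is twisted by the coboundary of `lam`. -/
structure IsSkewProduct (Ω : H →* Equiv.Perm (X × R)) : Prop where
  map_fst : ∀ g x τ, Ω (ι₁ g) (x, τ) = (Φ (ι₁ g) x, τ)
  map_snd : ∀ g x τ, Ω (ι₂ g) (x, τ) = (Φ (ι₂ g) x, τ + (lam (Φ (ι₂ g) x) - lam x))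

theorem IsAmalgam.exists_isSkewProduct (A : IsAmalgam a b ι₁ ι₂)
    (hlam : ∀ x, lam (Φ (ι₁ a) x) = lam x) : ∃ Ω, IsSkewProduct ι₁ ι₂ Φ lam Ω := by
  let pad : Equiv.Perm X →* Equiv.Perm (X × R) :=
    { toFun := fun σ => σ.prodCongr (Equiv.refl R)
      map_one' := by ext <;> simp
      map_mul' := fun _ _ => by ext <;> simp }
  let shear : Equiv.Perm (X × R) :=
    { toFun := fun z => (z.1, z.2 + lam z.1)
      invFun := fun z => (z.1, z.2 - lam z.1)
      left_inv := fun z => by simp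
      right_inv := fun z => by simp }
  obtain ⟨Ω, h₁, h₂⟩ := A.exists_lift (Equiv.Perm (X × R)) (pad.comp (Φ.comp ι₁))
    ((MulAut.conj shear).toMonoidHom.comp (pad.comp (Φ.comp ι₂))) (by
      ext ⟨x, τ⟩ <;> simp [pad, shear, Equiv.Perm.inv_def, ← A.map_eq, hlam])
  refine ⟨Ω, fun g x τ => ?_, fun g x τ => ?_⟩
  · simp [h₁, pad]
  · simp [h₂, pad, shear, Equiv.Perm.inv_def, sub_add_eq_add_sub, add_sub_assoc]

namespace IsSkewProduct

variable {Ω : H →* Equiv.Perm (X × R)}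

theorem halfPoint_eq (S : IsSkewProduct ι₁ ι₂ Φ lam Ω) {τ σ : R} {n : ℕ}
    (h : fullPoint ι₁ ι₂ Ω u (x, τ) n = (fullPoint ι₁ ι₂ Φ u x n, σ)) :
    halfPoint ι₁ ι₂ Ω u (x, τ) n = (halfPoint ι₁ ι₂ Φ u x n, σ) := by
  rw [halfPoint, h, S.map_fst, halfPoint]

theorem fullPoint_eq (S : IsSkewProduct ι₁ ι₂ Φ lam Ω) (τ : R) (n : ℕ) :
    fullPoint ι₁ ι₂ Ω u (x, τ) n =
      (fullPoint ι₁ ι₂ Φ u x n, τ + displacement ι₁ ι₂ Φ lam u x n) := by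
  induction n with
  | zero => simp [fullPoint_zero, displacement]
  | succ n ih =>
    rw [fullPoint_succ, S.halfPoint_eq ih, S.map_snd, fullPoint_succ]
    simp only [displacement, Finset.sum_range_succ, fullPoint_succ, Prod.mk.injEq, true_and]
    abel

theorem cyclicProd_pow_apply (S : IsSkewProduct ι₁ ι₂ Φ lam Ω) (n : ℕ) (x : X) (τ : R) :
    (Ω (cyclicProd (syllable ι₁ ι₂ ∘ u) 0 k) ^ n) (x, τ) =
      ((Φ (cyclicProd (syllable ι₁ ι₂ ∘ u) 0 k) ^ n) x,
        τ + displacement ι₁ ι₂ Φ lam u x (k * n)) := by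
  simpa only [fullPoint, cyclicProd_mul, map_pow] using S.fullPoint_eq (u := u) (x := x) τ (k * n)

theorem orderOf_fst_dvd (S : IsSkewProduct ι₁ ι₂ Φ lam Ω) (g : F₁) :
    orderOf (Ω (ι₁ g)) ∣ orderOf (Φ (ι₁ g)) := by
  refine orderOf_dvd_of_pow_eq_one (Equiv.ext fun ⟨x, τ⟩ => ?_)
  rw [← map_pow, ← map_pow, S.map_fst, map_pow, map_pow, pow_orderOf_eq_one]
  rfl

theorem orderOf_snd_dvd (S : IsSkewProduct ι₁ ι₂ Φ lam Ω) (g : F₂) :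
    orderOf (Ω (ι₂ g)) ∣ orderOf (Φ (ι₂ g)) := by
  refine orderOf_dvd_of_pow_eq_one (Equiv.ext fun ⟨x, τ⟩ => ?_)
  rw [← map_pow, ← map_pow, S.map_snd, map_pow, map_pow, pow_orderOf_eq_one]
  simp

theorem dvd_orderOf {N : ℕ} {lam : X → ZMod N} {Ω : H →* Equiv.Perm (X × ZMod N)}
    (S : IsSkewProduct ι₁ ι₂ Φ lam Ω) {s : ℕ}
    (hx : (Φ (cyclicProd (syllable ι₁ ι₂ ∘ u) 0 k) ^ s) x = x)
    (hu : IsUnit (displacement ι₁ ι₂ Φ lam u x (k * s))) :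
    N ∣ orderOf (Ω (cyclicProd (syllable ι₁ ι₂ ∘ u) 0 k)) :=
  (dvd_orderOf_of_apply_eq hu fun τ => by rw [S.cyclicProd_pow_apply, hx]).trans (orderOf_pow_dvd s)

theorem sum_displacement_eq_zero {q : ℕ} [NeZero q] {lam : X → ZMod q}
    {Ω : H →* Equiv.Perm (X × ZMod q)} (S : IsSkewProduct ι₁ ι₂ Φ lam Ω) {mu : X × ZMod q → R}
    (hmu : ∀ x, ∑ τ, mu (x, τ) = 0) (n : ℕ) (x : X) :
    ∑ τ, displacement ι₁ ι₂ Ω mu u (x, τ) n = 0 := by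
  have hshift (y : X) (c : ZMod q) : ∑ τ, mu (y, τ + c) = 0 :=
    (Equiv.sum_comp (Equiv.addRight c) fun τ => mu (y, τ)).trans (hmu y)
  simp only [displacement, S.halfPoint_eq (S.fullPoint_eq _ _), S.fullPoint_eq,
    Finset.sum_sub_distrib]
  rw [Finset.sum_comm, Finset.sum_comm (s := Finset.univ)]
  simp only [hshift, Finset.sum_const_zero, sub_zero]

theorem cyclicProd_pow_eq_one {q : ℕ} [Fact q.Prime] {lam : X → ZMod q} {mu : X × ZMod q → R}
    {Ω : H →* Equiv.Perm (X × ZMod q)} {Ω' : H →* Equiv.Perm ((X × ZMod q) × R)}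
    (S : IsSkewProduct ι₁ ι₂ Φ lam Ω) (S' : IsSkewProduct ι₁ ι₂ Ω mu Ω')
    (hmu : ∀ x, ∑ τ, mu (x, τ) = 0) {s : ℕ}
    (hs : Φ (cyclicProd (syllable ι₁ ι₂ ∘ u) 0 k) ^ s = 1)
    (hu : ∀ x, displacement ι₁ ι₂ Φ lam u x (k * s) ≠ 0) :
    Ω' (cyclicProd (syllable ι₁ ι₂ ∘ u) 0 k) ^ (s * q) = 1 := by
  rw [pow_mul]
  refine skew_skew_pow_eq_one (g := fun z => displacement ι₁ ι₂ Ω mu u z (k * s)) hu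
    (S.sum_displacement_eq_zero hmu (k * s)) fun x τ σ => ?_
  rw [S'.cyclicProd_pow_apply, S.cyclicProd_pow_apply, hs, Equiv.Perm.one_apply]

end IsSkewProduct

end Displacement

section Transversality

variable {F₁ F₂ H : Type} [Group F₁] [Group F₂] [Group H] {a : F₁} {b : F₂} {ι₁ : F₁ →* H}
  {ι₂ : F₂ →* H} {k l : ℕ} {X : Type} {Φ : H →* Equiv.Perm X} {u : ZMod k → F₁ × F₂}
  {v : ZMod l → F₁ × F₂} {x y : X}

variable (a ι₁ ι₂ Φ u x) in
/-- No cycle of `a` contains both a full point and a half point of the path that the cyclic word `u`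
traces from `x`. -/
def Transverse : Prop :=
  ∀ m n, ¬ (Φ (ι₁ a)).SameCycle (fullPoint ι₁ ι₂ Φ u x m) (halfPoint ι₁ ι₂ Φ u x n)

/-- The indicator function of the cycle of `t` through `y`. -/
noncomputable def cycleIndicator (R : Type) [Zero R] [One R] (t : Equiv.Perm X) (y : X) : X → R :=
  Set.indicator {z | t.SameCycle y z} 1

theorem cycleIndicator_apply_perm {R : Type} [Zero R] [One R] (t : Equiv.Perm X) (y z : X) :
    cycleIndicator R t y (t z) = cycleIndicator R t y z :=
  Set.indicator_eq_indicator Equiv.Perm.sameCycle_apply_right rfl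

open Classical in
theorem displacement_cycleIndicator (R : Type) [Ring R] (t : Equiv.Perm X) (y : X) (n : ℕ) :
    displacement ι₁ ι₂ Φ (cycleIndicator R t y) u x n =
      ({i ∈ Finset.range n | t.SameCycle y (fullPoint ι₁ ι₂ Φ u x (i + 1))}.card : R) -
        {i ∈ Finset.range n | t.SameCycle y (halfPoint ι₁ ι₂ Φ u x i)}.card := by
  simp only [displacement, cycleIndicator, Set.indicator, Set.mem_ofPred_eq, Pi.one_apply,
    Finset.sum_boole]

theorem displacement_eq_zero {R : Type} [AddCommGroup R] {lam : X → R}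
    (h : ∀ y ∈ trace ι₁ ι₂ Φ u x, lam y = 0) (n : ℕ) : displacement ι₁ ι₂ Φ lam u x n = 0 := by
  rw [displacement, Finset.sum_eq_zero fun i _ => h _ (.inl ⟨i + 1, rfl⟩),
    Finset.sum_eq_zero fun i _ => h _ (.inr ⟨i, rfl⟩), sub_zero]

theorem fullPoint_periodic {s : ℕ} (hs : (Φ (cyclicProd (syllable ι₁ ι₂ ∘ u) 0 k) ^ s) x = x) :
    Function.Periodic (fullPoint ι₁ ι₂ Φ u x) (k * s) := fun n => by
  rw [fullPoint, add_comm, cyclicProd_add, Nat.cast_mul, ZMod.natCast_self, zero_mul, add_zero,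
    map_mul, Equiv.Perm.mul_apply, cyclicProd_mul, map_pow, hs, fullPoint]

theorem halfPoint_periodic {s : ℕ} (hs : (Φ (cyclicProd (syllable ι₁ ι₂ ∘ u) 0 k) ^ s) x = x) :
    Function.Periodic (halfPoint ι₁ ι₂ Φ u x) (k * s) := fun n => by
  rw [halfPoint, fullPoint_periodic hs n, Nat.cast_add, Nat.cast_mul, ZMod.natCast_self, zero_mul,
    add_zero, halfPoint]

theorem exists_lt_fullPoint_succ_eq [NeZero k] {s : ℕ} (hs₀ : 0 < s)
    (hs : (Φ (cyclicProd (syllable ι₁ ι₂ ∘ u) 0 k) ^ s) x = x) (n : ℕ) :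
    ∃ i < k * s, fullPoint ι₁ ι₂ Φ u x (i + 1) = fullPoint ι₁ ι₂ Φ u x n := by
  have hks : 0 < k * s := Nat.mul_pos (NeZero.pos k) hs₀
  refine ⟨(n + k * s - 1) % (k * s), Nat.mod_lt _ hks, ?_⟩
  rw [← (fullPoint_periodic hs).map_mod_nat, Nat.mod_add_mod, Nat.sub_add_cancel (by lia),
    Nat.add_mod_right, (fullPoint_periodic hs).map_mod_nat]

theorem Transverse.displacement_cycleIndicator_ne_zero [NeZero k]
    (hu : Transverse a ι₁ ι₂ Φ u x) (hy : y ∈ trace ι₁ ι₂ Φ u x) {s p : ℕ} (hs₀ : 0 < s)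
    (hs : (Φ (cyclicProd (syllable ι₁ ι₂ ∘ u) 0 k) ^ s) x = x) (hp : k * s < p) :
    displacement ι₁ ι₂ Φ (cycleIndicator (ZMod p) (Φ (ι₁ a)) y) u x (k * s) ≠ 0 := by
  classical
  have hcard (P : ℕ → Prop) (hP : ∃ i < k * s, P i) :
      ({i ∈ Finset.range (k * s) | P i}.card : ZMod p) ≠ 0 := by
    obtain ⟨i, hi, hPi⟩ := hP
    rw [Ne, ZMod.natCast_eq_zero_iff]
    refine Nat.not_dvd_of_pos_of_lt
      (Finset.card_pos.mpr ⟨i, Finset.mem_filter.mpr ⟨Finset.mem_range.mpr hi, hPi⟩⟩) ?_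
    exact (Finset.card_filter_le _ _).trans_lt (by rwa [Finset.card_range])
  rw [displacement_cycleIndicator]
  obtain ⟨n, rfl⟩ | ⟨n, rfl⟩ := hy
  · obtain ⟨i, hi, hin⟩ := exists_lt_fullPoint_succ_eq hs₀ hs n
    simp only [hu n _, Finset.filter_false, Finset.card_empty, Nat.cast_zero, sub_zero]
    exact hcard _ ⟨i, hi, hin ▸ .refl _ _⟩
  · have h (m : ℕ) : ¬ (Φ (ι₁ a)).SameCycle (halfPoint ι₁ ι₂ Φ u x n)
        (fullPoint ι₁ ι₂ Φ u x m) := fun h => hu m n h.symm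
    simp only [h, Finset.filter_false, Finset.card_empty, Nat.cast_zero, zero_sub, ne_eq,
      neg_eq_zero]
    refine hcard _ ⟨n % (k * s), Nat.mod_lt _ (Nat.mul_pos (NeZero.pos k) hs₀), ?_⟩
    rw [(halfPoint_periodic hs).map_mod_nat]

theorem exists_invariant_displacement_ne_zero [Finite X] [NeZero l] {S : Set X}
    (hv : ∀ x, Transverse a ι₁ ι₂ Φ v x)
    (hS : ∀ x, ¬ trace ι₁ ι₂ Φ v x ⊆ cycleHull (Φ (ι₁ a)) S) {s q : ℕ} [Fact q.Prime]
    (hs₀ : 0 < s) (hs : Φ (cyclicProd (syllable ι₁ ι₂ ∘ v) 0 l) ^ s = 1) (hq : l * s < q)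
    (hX : Nat.card X < q) :
    ∃ lam : X → ZMod q, (∀ x, lam (Φ (ι₁ a) x) = lam x) ∧ (∀ y ∈ S, lam y = 0) ∧
      ∀ x, displacement ι₁ ι₂ Φ lam v x (l * s) ≠ 0 := by
  let V : Submodule (ZMod q) (X → ZMod q) :=
    { carrier := {f | (∀ x, f (Φ (ι₁ a) x) = f x) ∧ ∀ y ∈ S, f y = 0}
      zero_mem' := by simp
      add_mem' := fun hf hg => by simp +contextual [hf.1, hf.2, hg.1, hg.2]
      smul_mem' := fun c f hf => by simp +contextual [hf.1, hf.2] }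
  let D (x : X) : V →ₗ[ZMod q] ZMod q :=
    { toFun := fun f => displacement ι₁ ι₂ Φ f.1 v x (l * s)
      map_add' := fun f g => by simp [displacement, Finset.sum_add_distrib, add_sub_add_comm]
      map_smul' := fun c f => by simp [displacement, Finset.mul_sum, mul_sub] }
  have hD (x : X) : LinearMap.ker (D x) ≠ ⊤ := by
    obtain ⟨y, hy, hyS⟩ := Set.not_subset.mp (hS x)
    intro h
    have hyV : cycleIndicator (ZMod q) (Φ (ι₁ a)) y ∈ V :=
      ⟨cycleIndicator_apply_perm _ _, fun z hz =>
        Set.indicator_of_notMem (fun h => hyS ⟨z, hz, h.symm⟩) _⟩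
    exact (hv x).displacement_cycleIndicator_ne_zero hy hs₀ (by rw [hs]; rfl) hq
      (LinearMap.mem_ker.mp (h ▸ Submodule.mem_top : (⟨_, hyV⟩ : V) ∈ LinearMap.ker (D x)))
  have := Fintype.ofFinite X
  obtain ⟨f, hf⟩ := (Set.ne_univ_iff_exists_notMem _).mp
    (Submodule.iUnion_ssubset_of_forall_ne_top_of_card_lt Finset.univ _ hD (by simpa using hX)).ne
  exact ⟨f, f.2.1, f.2.2, fun x hx =>
    hf (Set.mem_iUnion₂.mpr ⟨x, Finset.mem_univ x, LinearMap.mem_ker.mpr hx⟩)⟩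

end Transversality

section OrderVaries

/-- Two elements are order-separated if their images under some finite permutation representation
have different orders. -/
def OrderSeparated {G : Type} [Group G] (u v : G) : Prop :=
  ∃ (X : Type) (_ : Finite X) (Ω : G →* Equiv.Perm X), orderOf (Ω u) ≠ orderOf (Ω v)

/-- Among the finite permutation representations that give `v` a fixed order, the order of the image
of `u` can vary. -/
def OrderVaries {G : Type} [Group G] (u v : G) : Prop :=
  ∃ (X Y : Type) (_ : Finite X) (_ : Finite Y) (Ω : G →* Equiv.Perm X) (Ω' : G →* Equiv.Perm Y),
    orderOf (Ω v) = orderOf (Ω' v) ∧ orderOf (Ω u) ≠ orderOf (Ω' u)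

variable {G : Type} [Group G] {u u' v v' : G}

theorem OrderSeparated.symm (h : OrderSeparated u v) : OrderSeparated v u :=
  let ⟨X, hX, Ω, h⟩ := h
  ⟨X, hX, Ω, h.symm⟩

theorem OrderSeparated.of_monoidHom {Γ : Type} [Group Γ] [Finite Γ] (ψ : G →* Γ)
    (h : orderOf (ψ u) ≠ orderOf (ψ v)) : OrderSeparated u v := by
  refine ⟨Γ, inferInstance, (MulAction.toPermHom Γ Γ).comp ψ, ?_⟩
  have hinj : Function.Injective (MulAction.toPermHom Γ Γ) := MulAction.toPerm_injective
  rwa [MonoidHom.comp_apply, MonoidHom.comp_apply, orderOf_injective _ hinj,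
    orderOf_injective _ hinj]

theorem OrderSeparated.of_map {K : Type} [Group K] (σ : G →* K)
    (h : OrderSeparated (σ u) (σ v)) : OrderSeparated u v :=
  let ⟨X, hX, Ω, h⟩ := h
  ⟨X, hX, Ω.comp σ, h⟩

theorem OrderVaries.of_map {K : Type} [Group K] (σ : G →* K) (h : OrderVaries (σ u) (σ v)) :
    OrderVaries u v :=
  let ⟨X, Y, hX, hY, Ω, Ω', h⟩ := h
  ⟨X, Y, hX, hY, Ω.comp σ, Ω'.comp σ, h⟩

theorem orderOf_map_eq_of_isConj {K : Type} [Group K] (σ : G →* K) (h : IsConj u v) :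
    orderOf (σ u) = orderOf (σ v) :=
  let ⟨_, hc⟩ := σ.map_isConj h
  hc.orderOf_eq

theorem isConj_inv_inv (h : IsConj u v) : IsConj u⁻¹ v⁻¹ := by
  obtain ⟨c, rfl⟩ := isConj_iff.mp h
  exact isConj_iff.mpr ⟨c, conj_inv.symm⟩

theorem OrderSeparated.of_isConj (h : OrderSeparated u' v') (hu : IsConj u u')
    (hv : IsConj v v') : OrderSeparated u v := by
  obtain ⟨X, hX, Ω, h⟩ := h
  exact ⟨X, hX, Ω, by rwa [orderOf_map_eq_of_isConj Ω hu, orderOf_map_eq_of_isConj Ω hv]⟩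

theorem OrderVaries.of_isConj (h : OrderVaries u' v') (hu : IsConj u u') (hv : IsConj v v') :
    OrderVaries u v := by
  obtain ⟨X, Y, hX, hY, Ω, Ω', h⟩ := h
  refine ⟨X, Y, hX, hY, Ω, Ω', ?_⟩
  simpa only [orderOf_map_eq_of_isConj _ hu, orderOf_map_eq_of_isConj _ hv] using h

theorem OrderVaries.orderSeparated (h : OrderVaries u v) : OrderSeparated u v := by
  obtain ⟨X, Y, hX, hY, Ω, Ω', hv, hu⟩ := h
  by_contra hsep
  simp only [OrderSeparated, not_exists, ne_eq, not_not] at hsep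
  exact hu (((hsep X hX Ω).trans hv).trans (hsep Y hY Ω').symm)

end OrderVaries

section SkewOrders

variable {F₁ F₂ H : Type} [Group F₁] [Group F₂] [Group H] {a : F₁} {b : F₂} {ι₁ : F₁ →* H}
  {ι₂ : F₂ →* H} {k l : ℕ} {X : Type} {Φ : H →* Equiv.Perm X} {u : ZMod k → F₁ × F₂}
  {v : ZMod l → F₁ × F₂} {x : X}

theorem exists_pulse {q : ℕ} [Fact q.Prime] (R : Type) [Ring R] (f : X → R) :
    ∃ mu : X × ZMod q → R, (∀ y, mu (y, 0) = f y) ∧ (∀ y, ∑ τ, mu (y, τ) = 0) ∧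
      ∀ y z τ, f y = f z → mu (y, τ) = mu (z, τ) := by
  refine ⟨fun z => f z.1 * ((if z.2 = 0 then 1 else 0) - if z.2 = 1 then 1 else 0), fun y => ?_,
    fun y => ?_, fun y z τ h => by simp only [h]⟩
  · simp
  · simp [← Finset.mul_sum, Finset.sum_sub_distrib]

theorem IsSkewProduct.displacement_eq_of_trace {R S : Type} [AddCommGroup R] [AddCommGroup S]
    {lam : X → R} {Ω : H →* Equiv.Perm (X × R)} (hΩ : IsSkewProduct ι₁ ι₂ Φ lam Ω)
    (hlam : ∀ y ∈ trace ι₁ ι₂ Φ u x, lam y = 0) (mu : X × R → S) (n : ℕ) :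
    displacement ι₁ ι₂ Ω mu u (x, 0) n = displacement ι₁ ι₂ Φ (fun y => mu (y, 0)) u x n := by
  have h (n : ℕ) : fullPoint ι₁ ι₂ Ω u (x, 0) n = (fullPoint ι₁ ι₂ Φ u x n, 0) := by
    rw [hΩ.fullPoint_eq, displacement_eq_zero hlam, add_zero]
  simp only [displacement, h, hΩ.halfPoint_eq (h _)]

theorem IsAmalgam.orderVaries_of_displacement_ne_zero (A : IsAmalgam a b ι₁ ι₂) [Finite X]
    [NeZero k] {q : ℕ} [Fact q.Prime] {lam : X → ZMod q} (hlam : ∀ y, lam (Φ (ι₁ a) y) = lam y)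
    (hu : Transverse a ι₁ ι₂ Φ u x) (hlamu : ∀ y ∈ trace ι₁ ι₂ Φ u x, lam y = 0)
    (hlamv : ∀ y, displacement ι₁ ι₂ Φ lam v y
      (l * orderOf (Φ (cyclicProd (syllable ι₁ ι₂ ∘ v) 0 l))) ≠ 0) :
    OrderVaries (cyclicProd (syllable ι₁ ι₂ ∘ u) 0 k) (cyclicProd (syllable ι₁ ι₂ ∘ v) 0 l) := by
  set U := cyclicProd (syllable ι₁ ι₂ ∘ u) 0 k
  set V := cyclicProd (syllable ι₁ ι₂ ∘ v) 0 l
  obtain ⟨Ω, hΩ⟩ := A.exists_isSkewProduct hlam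
  obtain ⟨p, hp, hpp⟩ := Nat.exists_infinite_primes
    (k * orderOf (Φ U) + orderOf (Φ V) * q + Nat.card (Equiv.Perm (X × ZMod q)) + 1)
  have : Fact p.Prime := ⟨hpp⟩
  obtain ⟨mu, hmu₀, hmu, hmu'⟩ :=
    exists_pulse (q := q) (ZMod p) (cycleIndicator (ZMod p) (Φ (ι₁ a)) x)
  obtain ⟨Ω', hΩ'⟩ := A.exists_isSkewProduct (Φ := Ω) (lam := mu) fun ⟨y, τ⟩ => by
    rw [hΩ.map_fst]
    exact hmu' _ _ _ (cycleIndicator_apply_perm _ _ _)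
  refine ⟨_, _, inferInstance, inferInstance, Ω, Ω', ?_, fun h => ?_⟩
  · refine (orderOf_eq_of_skew (p := p) (g := (displacement ι₁ ι₂ Ω mu v · l)) (fun z τ => ?_)
      (by simp) (hΩ.cyclicProd_pow_eq_one hΩ' hmu (pow_orderOf_eq_one _) hlamv) ?_).symm
    · simpa using hΩ'.cyclicProd_pow_apply (u := v) 1 z τ
    · exact (Nat.coprime_of_lt_prime (Nat.mul_pos (orderOf_pos _) (NeZero.pos q)).ne'
        (by lia) hpp).symm
  · have hUx : (Φ U ^ orderOf (Φ U)) x = x := by rw [pow_orderOf_eq_one, Equiv.Perm.one_apply]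
    have hdvd : p ∣ orderOf (Ω' U) := by
      refine hΩ'.dvd_orderOf (x := (x, 0)) (s := orderOf (Φ U)) ?_ (IsUnit.mk0 _ ?_)
      · rw [hΩ.cyclicProd_pow_apply, hUx, displacement_eq_zero hlamu, add_zero]
      · rw [hΩ.displacement_eq_of_trace hlamu, funext hmu₀]
        exact hu.displacement_cycleIndicator_ne_zero (.inl ⟨0, fullPoint_zero⟩) (orderOf_pos _) hUx
          (by lia)
    have := Nat.le_of_dvd Nat.card_pos ((h ▸ hdvd).trans (orderOf_dvd_natCard _))
    lia

theorem IsAmalgam.orderVaries_of_not_trace_subset (A : IsAmalgam a b ι₁ ι₂) [Finite X]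
    [NeZero k] [NeZero l] (hu : Transverse a ι₁ ι₂ Φ u x) (hv : ∀ y, Transverse a ι₁ ι₂ Φ v y)
    (huv : ∀ y, ¬ trace ι₁ ι₂ Φ v y ⊆ cycleHull (Φ (ι₁ a)) (trace ι₁ ι₂ Φ u x)) :
    OrderVaries (cyclicProd (syllable ι₁ ι₂ ∘ u) 0 k) (cyclicProd (syllable ι₁ ι₂ ∘ v) 0 l) := by
  obtain ⟨q, hq, hqp⟩ := Nat.exists_infinite_primes
    (l * orderOf (Φ (cyclicProd (syllable ι₁ ι₂ ∘ v) 0 l)) + Nat.card X + 1)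
  have : Fact q.Prime := ⟨hqp⟩
  obtain ⟨lam, hlam, hlamu, hlamv⟩ := exists_invariant_displacement_ne_zero hv huv (q := q)
    (orderOf_pos _) (pow_orderOf_eq_one _) (by lia) (by lia)
  exact A.orderVaries_of_displacement_ne_zero hlam hu hlamu hlamv

end SkewOrders

section Equivariance

variable {F₁ F₂ H : Type} [Group F₁] [Group F₂] [Group H] {a : F₁} {ι₁ : F₁ →* H}
  {ι₂ : F₂ →* H} {k : ℕ} {X Y : Type} {Φ : H →* Equiv.Perm X} {Φ' : H →* Equiv.Perm Y}
  {u : ZMod k → F₁ × F₂} {e : X → Y}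

theorem trace_map (he : ∀ h x, e (Φ h x) = Φ' h (e x)) (x : X) :
    trace ι₁ ι₂ Φ' u (e x) = e '' trace ι₁ ι₂ Φ u x := by
  rw [trace, trace, Set.image_union, ← Set.range_comp, ← Set.range_comp]
  congr 2 <;> ext n <;> simp only [Function.comp_apply, fullPoint, halfPoint, he]

theorem sameCycle_map (he : ∀ h x, e (Φ h x) = Φ' h (e x)) {h : H} {x y : X}
    (hxy : (Φ h).SameCycle x y) : (Φ' h).SameCycle (e x) (e y) := by
  obtain ⟨n, rfl⟩ := hxy
  exact ⟨n, by rw [← map_zpow, ← map_zpow, he]⟩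

theorem image_cycleHull_subset (he : ∀ h x, e (Φ h x) = Φ' h (e x)) (h : H) (S : Set X) :
    e '' cycleHull (Φ h) S ⊆ cycleHull (Φ' h) (e '' S) := by
  rintro _ ⟨y, ⟨z, hz, hzy⟩, rfl⟩
  exact ⟨e z, ⟨z, hz, rfl⟩, sameCycle_map he hzy⟩

theorem Transverse.of_map (he : ∀ h x, e (Φ h x) = Φ' h (e x)) {x : X}
    (h : Transverse a ι₁ ι₂ Φ' u (e x)) : Transverse a ι₁ ι₂ Φ u x := fun m n hmn => by
  refine h m n ?_
  simpa only [fullPoint, halfPoint, he] using sameCycle_map he hmn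

end Equivariance

section CircuitOrders

variable {F₁ F₂ H : Type} [Group F₁] [Group F₂] [Group H] {a : F₁} {b : F₂} {ι₁ : F₁ →* H}
  {ι₂ : F₂ →* H} {k : ℕ} {X : Type} {Φ : H →* Equiv.Perm X} {u : ZMod k → F₁ × F₂}
  {Γ₁ Γ₂ : Type} [Group Γ₁] [Group Γ₂] {ψ₁ : F₁ →* Γ₁} {ψ₂ : F₂ →* Γ₂} {p q : ZMod k → X}

namespace Circuit

theorem fullPoint_eq (C : Circuit ι₁ ι₂ Φ u ψ₁ ψ₂ p q) (n : ℕ) :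
    fullPoint ι₁ ι₂ Φ u (p 0) n = p n := by
  induction n with
  | zero => rw [fullPoint_zero, Nat.cast_zero]
  | succ n ih => rw [fullPoint_succ, halfPoint, ih, C.map_fst, C.map_snd, Nat.cast_succ]

theorem halfPoint_eq (C : Circuit ι₁ ι₂ Φ u ψ₁ ψ₂ p q) (n : ℕ) :
    halfPoint ι₁ ι₂ Φ u (p 0) n = q n := by
  rw [halfPoint, C.fullPoint_eq, C.map_fst]

theorem trace_subset (C : Circuit ι₁ ι₂ Φ u ψ₁ ψ₂ p q) :
    trace ι₁ ι₂ Φ u (p 0) ⊆ Set.range p ∪ Set.range q := by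
  rintro _ (⟨n, rfl⟩ | ⟨n, rfl⟩)
  · exact .inl ⟨n, (C.fullPoint_eq n).symm⟩
  · exact .inr ⟨n, (C.halfPoint_eq n).symm⟩

theorem transverse (C : Circuit ι₁ ι₂ Φ u ψ₁ ψ₂ p q) (hu : ∀ j, ∀ x : ℤ, ψ₁ (u j).1 ≠ ψ₁ (a ^ x)) :
    Transverse a ι₁ ι₂ Φ u (p 0) := by
  rintro m n ⟨c, hc⟩
  rw [C.fullPoint_eq, C.halfPoint_eq, ← C.map_fst, ← map_zpow, ← map_zpow] at hc
  exact hu n c (C.free_fst.eq_of_apply_eq hc.symm).2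

theorem displacement_cycleIndicator_eq_one [NeZero k] (C : Circuit ι₁ ι₂ Φ u ψ₁ ψ₂ p q)
    (hu : ∀ j, ∀ x : ℤ, ψ₁ (u j).1 ≠ ψ₁ (a ^ x)) (R : Type) [Ring R] :
    displacement ι₁ ι₂ Φ (cycleIndicator R (Φ (ι₁ a)) (p 0)) u (p 0) k = 1 := by
  classical
  have hhalf (i : ℕ) : ¬ (Φ (ι₁ a)).SameCycle (p 0) (halfPoint ι₁ ι₂ Φ u (p 0) i) := by
    simpa only [fullPoint_zero] using C.transverse hu 0 i
  have hfull (i : ℕ) (hi : i < k) :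
      (Φ (ι₁ a)).SameCycle (p 0) (fullPoint ι₁ ι₂ Φ u (p 0) (i + 1)) ↔ i = k - 1 := by
    rw [C.fullPoint_eq]
    constructor
    · rintro ⟨c, hc⟩
      rw [← map_zpow, ← map_zpow] at hc
      have hdvd : k ∣ i + 1 := (ZMod.natCast_eq_zero_iff _ _).mp (C.free_fst _ _ _ hc).1
      have := Nat.le_of_dvd i.succ_pos hdvd
      lia
    · rintro rfl
      rw [Nat.sub_add_cancel NeZero.one_le, ZMod.natCast_self]
  rw [displacement_cycleIndicator, Finset.filter_false_of_mem fun i _ => hhalf i,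
    Finset.filter_congr fun i hi => hfull i (Finset.mem_range.mp hi), Finset.filter_eq',
    if_pos (Finset.mem_range.mpr (Nat.sub_one_lt (NeZero.ne k)))]
  simp

theorem exists_dvd_orderOf [NeZero k] (A : IsAmalgam a b ι₁ ι₂)
    (C : Circuit ι₁ ι₂ Φ u ψ₁ ψ₂ p q) (hu : ∀ j, ∀ x : ℤ, ψ₁ (u j).1 ≠ ψ₁ (a ^ x)) (N : ℕ) :
    ∃ Ω : H →* Equiv.Perm (X × ZMod N), N ∣ orderOf (Ω (cyclicProd (syllable ι₁ ι₂ ∘ u) 0 k)) ∧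
      (∀ g, orderOf (Ω (ι₁ g)) ∣ orderOf (Φ (ι₁ g))) ∧
      ∀ g, orderOf (Ω (ι₂ g)) ∣ orderOf (Φ (ι₂ g)) := by
  obtain ⟨Ω, hΩ⟩ := A.exists_isSkewProduct
    (cycleIndicator_apply_perm (R := ZMod N) (Φ (ι₁ a)) (p 0))
  refine ⟨Ω, hΩ.dvd_orderOf (x := p 0) (s := 1) ?_ ?_, hΩ.orderOf_fst_dvd, hΩ.orderOf_snd_dvd⟩
  · rw [pow_one]
    exact (C.fullPoint_eq k).trans (by rw [ZMod.natCast_self])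
  · rw [mul_one, C.displacement_cycleIndicator_eq_one hu]
    exact isUnit_one

theorem conjPow_or_orderVaries {l : ℕ} [Finite X] {Y : Type} [Finite Y] [NeZero k] [NeZero l]
    (A : IsAmalgam a b ι₁ ι₂) (C : Circuit ι₁ ι₂ Φ u ψ₁ ψ₂ p q) {v : ZMod l → F₁ × F₂}
    {Φ' : H →* Equiv.Perm Y} {p' q' : ZMod l → Y} (C' : Circuit ι₁ ι₂ Φ' v ψ₁ ψ₂ p' q')
    {M : ℕ} {S : Set F₁} {T : Set F₂}
    (D₁ : SeparatesDoubleCosets a S M ψ₁) (D₂ : SeparatesDoubleCosets b T M ψ₂)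
    (hu : ∀ j, u j ∈ S ×ˢ T) (hu' : ∀ j, reverseWord u j ∈ S ×ˢ T) (hv : ∀ j, v j ∈ S ×ˢ T) :
    (ConjPow k l (cyclicProd (syllable ι₁ ι₂ ∘ u) 0 k) (cyclicProd (syllable ι₁ ι₂ ∘ v) 0 l) ∨
      ConjPow k l (cyclicProd (syllable ι₁ ι₂ ∘ u) 0 k)⁻¹
        (cyclicProd (syllable ι₁ ι₂ ∘ v) 0 l)) ∨
    OrderVaries (cyclicProd (syllable ι₁ ι₂ ∘ u) 0 k) (cyclicProd (syllable ι₁ ι₂ ∘ v) 0 l) := by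
  let Θ : H →* Equiv.Perm (Equiv.Perm X × Equiv.Perm Y) :=
    (MulAction.toPermHom _ _).comp (Φ.prod Φ')
  let e (z : Equiv.Perm X × Equiv.Perm Y) : X := z.1 (p 0)
  have he (h : H) (z) : e (Θ h z) = Φ h (e z) := rfl
  by_cases hsub : ∀ z, ¬ trace ι₁ ι₂ Θ v z ⊆ cycleHull (Θ (ι₁ a)) (trace ι₁ ι₂ Θ u 1)
  · refine .inr (A.orderVaries_of_not_trace_subset
      (.of_map he (C.transverse fun j => D₁.map_ne _ (hu j).1)) (fun z => ?_) hsub)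
    refine .of_map (Φ' := Φ') (e := fun y => y.2 (z.2⁻¹ (p' 0))) (fun _ _ => rfl) ?_
    rw [Equiv.Perm.inv_def, Equiv.apply_symm_apply]
    exact C'.transverse fun j => D₁.map_ne _ (hv j).1
  · push Not at hsub
    obtain ⟨z, hz⟩ := hsub
    refine .inl (C.conjPow_or_conjPow_inv A D₁ D₂ hu hu' hv (x := e z) ?_)
    rw [trace_map he]
    rintro _ hy
    obtain ⟨w, hw, hwy⟩ := image_cycleHull_subset he _ _ (Set.image_mono hz hy)
    rw [← trace_map he] at hw
    exact ⟨w, C.trace_subset hw, hwy⟩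

end Circuit

end CircuitOrders

section Hyperbolic

variable {F₁ F₂ H : Type} [Group F₁] [Group F₂] [Group H] {ι₁ : F₁ →* H} {ι₂ : F₂ →* H}

/-- An element of an amalgam is hyperbolic if it is not conjugate into either factor, that is, if it
acts without fixed points on the Bass–Serre tree. -/
structure IsHyperbolic (ι₁ : F₁ →* H) (ι₂ : F₂ →* H) (u : H) : Prop where
  not_isConj_fst : ∀ f, ¬ IsConj u (ι₁ f)
  not_isConj_snd : ∀ f, ¬ IsConj u (ι₂ f)

theorem IsAmalgam.exists_isConj_cyclicProd {a : F₁} {b : F₂} (A : IsAmalgam a b ι₁ ι₂) {u : H}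
    (hu : IsHyperbolic ι₁ ι₂ u) : ∃ (k : ℕ) (_ : NeZero k) (w : ZMod k → F₁ × F₂),
      (∀ j, (w j).1 ∉ zpowers a) ∧ (∀ j, (w j).2 ∉ zpowers b) ∧
        IsConj u (cyclicProd (syllable ι₁ ι₂ ∘ w) 0 k) := by
  obtain ⟨f, h⟩ | ⟨f, h⟩ | h := A.isConj_factor_or_cyclicProd u
  exacts [(hu.not_isConj_fst f h).elim, (hu.not_isConj_snd f h).elim, h]

end Hyperbolic

section Amalgams

variable {α β H : Type} [Group H] {a : FreeGroup α} {b : FreeGroup β} {ι₁ : FreeGroup α →* H}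
  {ι₂ : FreeGroup β →* H} {u v : H}

theorem IsAmalgam.exists_forall_dvd_orderOf (A : IsAmalgam a b ι₁ ι₂) (ha : a ≠ 1)
    (hpa : NotProperPower a) (hb : b ≠ 1) (hpb : NotProperPower b) (hu : IsHyperbolic ι₁ ι₂ u) :
    ∃ m > 0, ∀ N > 0, ∃ (X : Type) (_ : Finite X) (Ω : H →* Equiv.Perm X), N ∣ orderOf (Ω u) ∧
      (∀ g, orderOf (Ω (ι₁ g)) ∣ m) ∧ ∀ g, orderOf (Ω (ι₂ g)) ∣ m := by
  obtain ⟨k, _, w, hw₁, hw₂, huw⟩ := A.exists_isConj_cyclicProd hu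
  obtain ⟨M, Γ₁, Γ₂, _, _, _, _, ψ₁, ψ₂, hord, D₁, D₂⟩ :=
    exists_separatesDoubleCosets_orderOf_eq ha hpa hb hpb
      (Set.finite_range fun j => (w j).1) (Set.forall_mem_range.mpr hw₁)
      (Set.finite_range fun j => (w j).2) (Set.forall_mem_range.mpr hw₂)
  have hψ₁ (j) := D₁.map_ne _ (Set.mem_range_self j)
  obtain ⟨X, _, Φ, p, q, C⟩ := A.exists_circuit hord hψ₁ fun j =>
    D₂.map_ne _ (Set.mem_range_self j)
  refine ⟨Nat.card (Equiv.Perm X), Nat.card_pos, fun N hN => ?_⟩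
  have : NeZero N := ⟨hN.ne'⟩
  obtain ⟨Ω, hΩ, h₁, h₂⟩ := C.exists_dvd_orderOf A hψ₁ N
  exact ⟨_, inferInstance, Ω, by rwa [orderOf_map_eq_of_isConj Ω huw],
    fun g => (h₁ g).trans (orderOf_dvd_natCard _), fun g => (h₂ g).trans (orderOf_dvd_natCard _)⟩

theorem IsAmalgam.orderSeparated_factor (A : IsAmalgam a b ι₁ ι₂) (ha : a ≠ 1)
    (hpa : NotProperPower a) (hb : b ≠ 1) (hpb : NotProperPower b) (hu : IsHyperbolic ι₁ ι₂ u) :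
    (∀ f, OrderSeparated u (ι₁ f)) ∧ ∀ f, OrderSeparated u (ι₂ f) := by
  obtain ⟨m, hm, h⟩ := A.exists_forall_dvd_orderOf ha hpa hb hpb hu
  obtain ⟨X, hX, Ω, hΩ, h₁, h₂⟩ := h (m + 1) m.succ_pos
  have hne {n : ℕ} (hn : n ∣ m) : orderOf (Ω u) ≠ n := fun he =>
    (Nat.lt_succ_self m).not_ge (Nat.le_of_dvd hm ((he ▸ hΩ).trans hn))
  exact ⟨fun f => ⟨X, hX, Ω, hne (h₁ f)⟩, fun f => ⟨X, hX, Ω, hne (h₂ f)⟩⟩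

theorem IsAmalgam.conjPow_or_orderVaries (A : IsAmalgam a b ι₁ ι₂) (ha : a ≠ 1)
    (hpa : NotProperPower a) (hb : b ≠ 1) (hpb : NotProperPower b) (hu : IsHyperbolic ι₁ ι₂ u)
    (hv : IsHyperbolic ι₁ ι₂ v) :
    (∃ k > 0, ∃ l > 0, ConjPow k l u v ∨ ConjPow k l u⁻¹ v) ∨ OrderVaries u v := by
  obtain ⟨k, hk, w, hw₁, hw₂, huw⟩ := A.exists_isConj_cyclicProd hu
  obtain ⟨l, hl, z, hz₁, hz₂, hvz⟩ := A.exists_isConj_cyclicProd hv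
  let t : ZMod k ⊕ ZMod k ⊕ ZMod l → FreeGroup α × FreeGroup β :=
    Sum.elim w (Sum.elim (reverseWord w) z)
  have ht₁ (j) : (t j).1 ∉ zpowers a := by
    rcases j with j | j | j
    exacts [hw₁ j, fun h => hw₁ (-j) (inv_mem_iff.mp h), hz₁ j]
  have ht₂ (j) : (t j).2 ∉ zpowers b := by
    rcases j with j | j | j
    exacts [hw₂ j, fun h => hw₂ (-j - 1) (inv_mem_iff.mp h), hz₂ j]
  obtain ⟨M, Γ₁, Γ₂, _, _, _, _, ψ₁, ψ₂, hord, D₁, D₂⟩ :=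
    exists_separatesDoubleCosets_orderOf_eq ha hpa hb hpb
      (Set.finite_range fun j => (t j).1) (Set.forall_mem_range.mpr ht₁)
      (Set.finite_range fun j => (t j).2) (Set.forall_mem_range.mpr ht₂)
  have ht (j) : t j ∈ (Set.range fun j => (t j).1) ×ˢ Set.range fun j => (t j).2 :=
    ⟨⟨j, rfl⟩, ⟨j, rfl⟩⟩
  have hw (j) := ht (.inl j)
  have hw' (j) := ht (.inr (.inl j))
  have hz (j) := ht (.inr (.inr j))
  obtain ⟨X, _, Φ, p, q, C⟩ := A.exists_circuit hord (fun j => D₁.map_ne _ (hw j).1)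
    fun j => D₂.map_ne _ (hw j).2
  obtain ⟨X', _, Φ', p', q', C'⟩ := A.exists_circuit hord (fun j => D₁.map_ne _ (hz j).1)
    fun j => D₂.map_ne _ (hz j).2
  refine (C.conjPow_or_orderVaries A C' D₁ D₂ hw hw' hz).imp (fun h => ?_)
    fun h => h.of_isConj huw hvz
  exact ⟨k, NeZero.pos k, l, NeZero.pos l,
    h.imp (·.of_isConj huw hvz) (·.of_isConj (isConj_inv_inv huw) hvz)⟩

theorem IsAmalgam.orderSeparated_of_isHyperbolic (A : IsAmalgam a b ι₁ ι₂) (ha : a ≠ 1)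
    (hpa : NotProperPower a) (hb : b ≠ 1) (hpb : NotProperPower b) (hu : IsHyperbolic ι₁ ι₂ u)
    (hv : IsHyperbolic ι₁ ι₂ v) (huv : ¬ IsConj u v) (huv' : ¬ IsConj u⁻¹ v) :
    OrderSeparated u v := by
  obtain ⟨k, hk, l, hl, hkl⟩ | h := A.conjPow_or_orderVaries ha hpa hb hpb hu hv
  swap
  · exact h.orderSeparated
  obtain ⟨_, _, hdvd⟩ := A.exists_forall_dvd_orderOf ha hpa hb hpb hu
  obtain ⟨X, hX, Ω, hΩ, -⟩ := hdvd (k * l) (Nat.mul_pos hk hl)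
  refine ⟨X, hX, Ω, fun heq => ?_⟩
  have hpow : orderOf (Ω u ^ l) = orderOf (Ω v ^ k) := by
    obtain h | h := hkl <;>
      simpa using orderOf_map_eq_of_isConj Ω (h l k (mul_comm k l))
  have hku : k ∣ orderOf (Ω u) := (dvd_mul_right k l).trans hΩ
  have hlu : l ∣ orderOf (Ω u) := (dvd_mul_left l k).trans hΩ
  rw [orderOf_pow_of_dvd hl.ne' hlu, orderOf_pow_of_dvd hk.ne' (heq ▸ hku), ← heq] at hpow
  obtain rfl : k = l :=
    Nat.eq_of_mul_eq_mul_left (Nat.div_pos (Nat.le_of_dvd (orderOf_pos _) hku) hk)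
      ((Nat.div_mul_cancel hku).trans (hpow ▸ Nat.div_mul_cancel hlu).symm)
  obtain h | h := hkl
  exacts [huv (by simpa using h 1 1 rfl), huv' (by simpa using h 1 1 rfl)]

end Amalgams

section Pushout

variable {α β : Type}

/-- The inclusion of the first free factor into the pushout. -/
def pushoutInl (a : FreeGroup α) (b : FreeGroup β) : FreeGroup α →* PushoutI (amalMaps a b) :=
  PushoutI.of (φ := amalMaps a b) true

/-- The inclusion of the second free factor into the pushout. -/
def pushoutInr (a : FreeGroup α) (b : FreeGroup β) : FreeGroup β →* PushoutI (amalMaps a b) :=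
  PushoutI.of (φ := amalMaps a b) false

theorem pushoutInl_lift (a : FreeGroup α) (b : FreeGroup β) (x : FreeGroup Unit) :
    pushoutInl a b (FreeGroup.lift (fun _ => a) x) = PushoutI.base (amalMaps a b) x :=
  PushoutI.of_apply_eq_base (amalMaps a b) true x

theorem pushoutInr_lift (a : FreeGroup α) (b : FreeGroup β) (x : FreeGroup Unit) :
    pushoutInr a b (FreeGroup.lift (fun _ => b) x) = PushoutI.base (amalMaps a b) x :=
  PushoutI.of_apply_eq_base (amalMaps a b) false x

theorem exists_pushoutI_lift {K : Type} [Group K] {a : FreeGroup α} {b : FreeGroup β}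
    {φ₁ : FreeGroup α →* K} {φ₂ : FreeGroup β →* K} (h : φ₁ a = φ₂ b) :
    ∃ Φ : PushoutI (amalMaps a b) →* K,
      (∀ f, Φ (pushoutInl a b f) = φ₁ f) ∧ ∀ g, Φ (pushoutInr a b g) = φ₂ g := by
  let φ : ∀ i, fam α β i →* K
    | true => φ₁
    | false => φ₂
  have hφ (i) : (φ i).comp (amalMaps a b i) = FreeGroup.lift fun _ => φ₁ a := by
    refine FreeGroup.ext_hom _ _ fun _ => ?_
    cases i
    · exact (congrArg φ₂ FreeGroup.lift_apply_of).trans (h.symm.trans FreeGroup.lift_apply_of.symm)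
    · exact (congrArg φ₁ FreeGroup.lift_apply_of).trans FreeGroup.lift_apply_of.symm
  exact ⟨PushoutI.lift φ _ hφ, PushoutI.lift_of (i := true) φ _ hφ,
    PushoutI.lift_of (i := false) φ _ hφ⟩

theorem isAmalgam_pushoutI (a : FreeGroup α) (b : FreeGroup β) :
    IsAmalgam a b (pushoutInl a b) (pushoutInr a b) where
  map_eq := by
    simpa using (pushoutInl_lift a b (FreeGroup.of ())).trans
      (pushoutInr_lift a b (FreeGroup.of ())).symm
  exists_lift _ _ _ _ h := exists_pushoutI_lift h
  range_sup_range := by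
    refine eq_top_iff.mpr fun x _ => ?_
    induction x using PushoutI.induction_on with
    | of i g =>
      cases i
      · exact mem_sup_right ⟨g, rfl⟩
      · exact mem_sup_left ⟨g, rfl⟩
    | base x => exact mem_sup_left ⟨_, pushoutInl_lift a b x⟩
    | mul x y hx hy => exact mul_mem (hx trivial) (hy trivial)

end Pushout

section FreeGroups

variable {α : Type}

theorem notProperPower_of (x : α) : NotProperPower (FreeGroup.of x) := fun w k h => by
  let exponentSum : FreeGroup α →* Multiplicative ℤ := FreeGroup.lift fun _ => .ofAdd 1
  have h : 1 = k * (exponentSum w).toAdd := by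
    simpa [exponentSum] using congrArg (fun g => (exponentSum g).toAdd) h
  exact (Int.isUnit_iff_natAbs_eq.mp (.of_mul_eq_one _ h.symm)).le

/- `σ` sends a generator `x` to the product of its copies in the two factors, and killing either
factor recovers `x`. -/
theorem exists_hom_isHyperbolic {H : Type} [Group H] {ι₁ ι₂ : FreeGroup (Option α) →* H}
    (A : IsAmalgam (.of none) (.of none) ι₁ ι₂) :
    ∃ (σ : FreeGroup α →* H) (ρ : H →* FreeGroup α), (∀ u, ρ (σ u) = u) ∧
      ∀ u, u ≠ 1 → IsHyperbolic ι₁ ι₂ (σ u) := by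
  let κ : FreeGroup (Option α) →* FreeGroup α := FreeGroup.lift fun o => o.elim 1 .of
  let σ : FreeGroup α →* H := FreeGroup.lift fun x => ι₁ (.of (some x)) * ι₂ (.of (some x))
  obtain ⟨ρ, hρ₁, hρ₂⟩ := A.exists_lift _ κ 1 (by simp [κ])
  obtain ⟨τ, hτ₁, hτ₂⟩ := A.exists_lift _ 1 κ (by simp [κ])
  have hρσ (u) : ρ (σ u) = u := DFunLike.congr_fun
    (FreeGroup.ext_hom (f := ρ.comp σ) (g := .id _) fun x => by simp [σ, κ, hρ₁, hρ₂]) u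
  have hτσ (u) : τ (σ u) = u := DFunLike.congr_fun
    (FreeGroup.ext_hom (f := τ.comp σ) (g := .id _) fun x => by simp [σ, κ, hτ₁, hτ₂]) u
  refine ⟨σ, ρ, hρσ, fun u hu => ⟨fun f hf => hu ?_, fun f hf => hu ?_⟩⟩
  · simpa [hτσ, hτ₁] using τ.map_isConj hf
  · simpa [hρσ, hρ₂] using ρ.map_isConj hf

theorem orderSeparated_one_of_ne_one {v : FreeGroup α} (hv : v ≠ 1) : OrderSeparated 1 v := by
  obtain ⟨Γ, _, _, ψ, h⟩ := exists_finite_orderOf_eq hv two_pos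
  exact .of_monoidHom ψ (by simp [h])

theorem orderSeparated_of_not_isConj {u v : FreeGroup α} (huv : ¬ IsConj u v)
    (huv' : ¬ IsConj u⁻¹ v) : OrderSeparated u v := by
  rcases eq_or_ne u 1 with rfl | hu
  · exact orderSeparated_one_of_ne_one fun h => huv (h ▸ .refl _)
  rcases eq_or_ne v 1 with rfl | hv
  · exact (orderSeparated_one_of_ne_one hu).symm
  have A := isAmalgam_pushoutI (FreeGroup.of (none : Option α)) (.of (none : Option α))
  obtain ⟨σ, ρ, hρσ, hσ⟩ := exists_hom_isHyperbolic A
  refine .of_map σ (A.orderSeparated_of_isHyperbolic (FreeGroup.of_ne_one _) (notProperPower_of _)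
    (FreeGroup.of_ne_one _) (notProperPower_of _) (hσ u hu) (hσ v hv)
    (fun h => huv ?_) fun h => huv' ?_)
  · simpa only [hρσ] using ρ.map_isConj h
  · simpa only [map_inv, hρσ] using ρ.map_isConj h

theorem NotProperPower.not_isConj_zpow {a u : FreeGroup α} (hpa : NotProperPower a) (ha : a ≠ 1)
    (hu : ∀ c : ℤ, ¬ IsConj u (a ^ c)) (k : ℤ) {l : ℤ} (hl : l ≠ 0) :
    ¬ IsConj (u ^ k) (a ^ l) := fun h => by
  obtain ⟨g, hg⟩ := isConj_iff.mp h
  obtain ⟨c, hc⟩ := hpa.mem_zpowers_of_zpow_eq_zpow ha hl (conj_zpow.trans hg)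
  exact hu c (isConj_iff.mpr ⟨g, hc.symm⟩)

theorem NotProperPower.orderVaries {a u : FreeGroup α} (hpa : NotProperPower a) (ha : a ≠ 1)
    (hu : ∀ c : ℤ, ¬ IsConj u (a ^ c)) : OrderVaries u a := by
  have hu₁ : u ≠ 1 := by
    rintro rfl
    exact hu 0 (by simp)
  have A := isAmalgam_pushoutI (FreeGroup.of (none : Option α)) (.of (none : Option α))
  obtain ⟨σ, ρ, hρσ, hσ⟩ := exists_hom_isHyperbolic A
  obtain ⟨k, hk, l, -, h⟩ | h := A.conjPow_or_orderVaries (FreeGroup.of_ne_one _)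
    (notProperPower_of _) (FreeGroup.of_ne_one _) (notProperPower_of _) (hσ u hu₁) (hσ a ha)
  · have not_isConj (r : ℤ) : ¬ IsConj (u ^ r) (a ^ k) := by
      simpa using hpa.not_isConj_zpow ha hu r (l := k) (by lia)
    obtain h | h := h
    · refine (not_isConj l ?_).elim
      simpa [hρσ] using ρ.map_isConj (h l k (mul_comm k l))
    · refine (not_isConj (-l) ?_).elim
      simpa [hρσ] using ρ.map_isConj (h l k (mul_comm k l))
  · exact h.of_map σ

end FreeGroups

section Separation

variable {α β H : Type} [Group H] {a : FreeGroup α} {b : FreeGroup β} {ι₁ : FreeGroup α →* H}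
  {ι₂ : FreeGroup β →* H} {u v : H}

theorem IsAmalgam.orderSeparated_fst (A : IsAmalgam a b ι₁ ι₂) (hb : b ≠ 1) {f g : FreeGroup α}
    (hfg : ¬ IsConj (ι₁ f) (ι₁ g)) (hfg' : ¬ IsConj (ι₁ f)⁻¹ (ι₁ g)) :
    OrderSeparated (ι₁ f) (ι₁ g) := by
  obtain ⟨X, _, ψ₁, h⟩ := orderSeparated_of_not_isConj (fun h => hfg (ι₁.map_isConj h))
    fun h => hfg' (map_inv ι₁ f ▸ ι₁.map_isConj h)
  obtain ⟨Γ, _, _, ψ₂, hord⟩ := exists_finite_orderOf_eq hb (orderOf_pos (ψ₁ a))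
  obtain ⟨Y, hY, Φ, hΦ, -⟩ := A.exists_orderOf_map_eq hord.symm
  exact ⟨Y, hY, Φ, by rwa [hΦ, hΦ]⟩

theorem IsAmalgam.orderSeparated_fst_snd (A : IsAmalgam a b ι₁ ι₂) (ha : a ≠ 1)
    (hpa : NotProperPower a) (hb : b ≠ 1) {f : FreeGroup α} {g : FreeGroup β}
    (hfg : ¬ IsConj (ι₁ f) (ι₂ g)) (hfg' : ¬ IsConj (ι₁ f)⁻¹ (ι₂ g)) :
    OrderSeparated (ι₁ f) (ι₂ g) := by
  by_cases hf : ∃ c : ℤ, IsConj f (a ^ c)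
  · obtain ⟨c, hc⟩ := hf
    have hc : IsConj (ι₁ f) (ι₂ (b ^ c)) := A.map_zpow_eq c ▸ ι₁.map_isConj hc
    exact .of_isConj (A.symm.orderSeparated_fst ha (fun h => hfg (hc.trans h))
      fun h => hfg' ((isConj_inv_inv hc).trans h)) hc (.refl _)
  · obtain ⟨X, X', _, _, ψ₁, ψ₁', h, h'⟩ := hpa.orderVaries ha (not_exists.mp hf)
    obtain ⟨Γ, _, _, ψ₂, hord⟩ := exists_finite_orderOf_eq hb (orderOf_pos (ψ₁ a))
    obtain ⟨Y, hY, Φ, h₁, h₂⟩ := A.exists_orderOf_map_eq hord.symm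
    obtain ⟨Y', hY', Φ', h₁', h₂'⟩ := A.exists_orderOf_map_eq (h.symm.trans hord.symm)
    exact OrderVaries.orderSeparated
      ⟨Y, Y', hY, hY', Φ, Φ', by rw [h₂, h₂'], by rwa [h₁, h₁']⟩

theorem IsAmalgam.orderSeparated_of_isConj_fst (A : IsAmalgam a b ι₁ ι₂) (ha : a ≠ 1)
    (hpa : NotProperPower a) (hb : b ≠ 1) (hpb : NotProperPower b) {f : FreeGroup α}
    (huf : IsConj u (ι₁ f)) (huv : ¬ IsConj u v) (huv' : ¬ IsConj u⁻¹ v) :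
    OrderSeparated u v := by
  have not_isConj {w : H} (hvw : IsConj v w) : ¬ IsConj (ι₁ f) w := fun h =>
    huv ((huf.trans h).trans hvw.symm)
  have not_isConj' {w : H} (hvw : IsConj v w) : ¬ IsConj (ι₁ f)⁻¹ w := fun h =>
    huv' (((isConj_inv_inv huf).trans h).trans hvw.symm)
  by_cases hv₁ : ∃ g, IsConj v (ι₁ g)
  · obtain ⟨g, hvg⟩ := hv₁
    exact (A.orderSeparated_fst hb (not_isConj hvg) (not_isConj' hvg)).of_isConj huf hvg
  by_cases hv₂ : ∃ g, IsConj v (ι₂ g)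
  · obtain ⟨g, hvg⟩ := hv₂
    exact (A.orderSeparated_fst_snd ha hpa hb (not_isConj hvg) (not_isConj' hvg)).of_isConj huf hvg
  have hv : IsHyperbolic ι₁ ι₂ v := ⟨not_exists.mp hv₁, not_exists.mp hv₂⟩
  exact ((A.orderSeparated_factor ha hpa hb hpb hv).1 f).symm.of_isConj huf (.refl v)

theorem IsAmalgam.orderSeparated (A : IsAmalgam a b ι₁ ι₂) (ha : a ≠ 1) (hpa : NotProperPower a)
    (hb : b ≠ 1) (hpb : NotProperPower b) (huv : ¬ IsConj u v) (huv' : ¬ IsConj u⁻¹ v) :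
    OrderSeparated u v := by
  by_cases hu₁ : ∃ f, IsConj u (ι₁ f)
  · exact A.orderSeparated_of_isConj_fst ha hpa hb hpb hu₁.choose_spec huv huv'
  by_cases hu₂ : ∃ f, IsConj u (ι₂ f)
  · exact A.symm.orderSeparated_of_isConj_fst hb hpb ha hpa hu₂.choose_spec huv huv'
  have hu : IsHyperbolic ι₁ ι₂ u := ⟨not_exists.mp hu₁, not_exists.mp hu₂⟩
  by_cases hv₁ : ∃ f, IsConj v (ι₁ f)
  · exact ((A.orderSeparated_factor ha hpa hb hpb hu).1 _).of_isConj (.refl u) hv₁.choose_spec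
  by_cases hv₂ : ∃ f, IsConj v (ι₂ f)
  · exact ((A.orderSeparated_factor ha hpa hb hpb hu).2 _).of_isConj (.refl u) hv₂.choose_spec
  exact A.orderSeparated_of_isHyperbolic ha hpa hb hpb hu
    ⟨not_exists.mp hv₁, not_exists.mp hv₂⟩ huv huv'

end Separation

theorem stmt0 {α β : Type} (a : FreeGroup α) (b : FreeGroup β)
    (ha : a ≠ 1) (hb : b ≠ 1) (hpa : NotProperPower a) (hpb : NotProperPower b)
    (g₁ g₂ : PushoutI (amalMaps a b))
    (h1 : ¬ IsConj g₁ g₂) (h2 : ¬ IsConj g₁ g₂⁻¹) :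
    ∃ (Q : Type) (_ : Group Q) (_ : Finite Q) (φ : PushoutI (amalMaps a b) →* Q),
      Function.Surjective φ ∧ orderOf (φ g₁) ≠ orderOf (φ g₂) := by
  have h2' : ¬ IsConj g₁⁻¹ g₂ := fun h => h2 (by simpa using isConj_inv_inv h)
  obtain ⟨X, _, Ω, hΩ⟩ := (isAmalgam_pushoutI a b).orderSeparated ha hpa hb hpb h1 h2'
  refine ⟨Ω.range, inferInstance, inferInstance, Ω.rangeRestrict, Ω.rangeRestrict_surjective, ?_⟩
  rwa [← Subgroup.orderOf_coe, ← Subgroup.orderOf_coe]
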